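/- Let A1 ⊂ A2 ⊂ ... be an increasing sequence of subsets of ℝ^n and A = ⋃_j A_j. Then lim_{j→∞} cap₁(A_j) = cap₁(A), where cap₁ denotes the Sobolev 1-capacity. -/

import Mathlib

open MeasureTheory Metric Set Filter ENNReal Topology

noncomputable section

/-- Euclidean space `ℝⁿ`. -/
abbrev En (n : ℕ) : Type := EuclideanSpace ℝ (Fin n)

variable {n : ℕ}

/-- `g` is the weak (distributional) gradient of `u : ℝⁿ → ℝ` on all of `ℝⁿ`. -/
def IsWeakGrad (u : En n → ℝ) (g : En n → (En n →L[ℝ] ℝ)) : Prop :=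
  ∀ φ : En n → ℝ, ContDiff ℝ 1 φ → HasCompactSupport φ →
    ∀ v : En n, ∫ x, u x * fderiv ℝ φ x v = - ∫ x, φ x * g x v

/-- The Sobolev 1-capacity: infimum of `W^{1,1}` norms of functions `u ≥ 1` on a
neighborhood of `A`. -/
def cap1 (A : Set (En n)) : ℝ≥0∞ :=
  sInf { c : ℝ≥0∞ | ∃ u : En n → ℝ, ∃ g : En n → (En n →L[ℝ] ℝ),
    Integrable u ∧ Integrable (fun x => ‖g x‖) ∧ IsWeakGrad u g ∧
    (∃ V : Set (En n), IsOpen V ∧ A ⊆ V ∧ ∀ x ∈ V, 1 ≤ u x) ∧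
    c = ENNReal.ofReal ((∫ x, |u x|) + ∫ x, ‖g x‖) }

/-- A set `U ⊆ ℝⁿ` is 1-finely open. -/
def FinelyOpen1 (U : Set (En n)) : Prop :=
  ∀ x ∈ U, Tendsto (fun r : ℝ => cap1 (Uᶜ ∩ ball x r) / ENNReal.ofReal (r ^ (n - 1)))
    (𝓝[>] 0) (𝓝 0)

/-- The relaxed quasiconformality quotient `K_{f,U}(x,r)`. -/
def KfU (f : En n → En n) (U : Set (En n)) (x : En n) (r : ℝ) : ℝ≥0∞ :=
  if volume (f '' ball x r) = 0 then ∞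
  else (EMetric.diam (f '' (ball x r ∩ U)) ^ n / volume (f '' ball x r)) ^ (((n : ℝ) - 1)⁻¹)

/-- Fine quasiconformal dilatation `K_f^fine(x)`. -/
def Kfine (f : En n → En n) (x : En n) : ℝ≥0∞ :=
  ⨅ (U : Set (En n)) (_ : FinelyOpen1 U) (_ : x ∈ U),
    Filter.limsup (fun r => KfU f U x r) (𝓝[>] 0)

/-- Metric quasiconformal dilatation `K_f(x)`. -/
def Kmetric (f : En n → En n) (x : En n) : ℝ≥0∞ :=
  Filter.limsup (fun r => KfU f univ x r) (𝓝[>] 0)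

/-- Volume derivative (Jacobian) `J_f(x)`. -/
def Jvol (f : En n → En n) (x : En n) : ℝ≥0∞ :=
  Filter.limsup (fun r => volume (f '' ball x r) / volume (ball x r)) (𝓝[>] 0)

/-- `g` is the weak gradient of the mapping `f : ℝⁿ → ℝⁿ` on the open set `Ω`. -/
def HasWeakGradOn (f : En n → En n) (g : En n → (En n →L[ℝ] En n)) (Ω : Set (En n)) : Prop :=
  ∀ φ : En n → ℝ, ContDiff ℝ 1 φ → HasCompactSupport φ → tsupport φ ⊆ Ω →
    ∀ v : En n, ∫ x in Ω, (fderiv ℝ φ x v) • f x = - ∫ x in Ω, φ x • g x v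

/-- The precise representative `f*` (componentwise limsup of ball averages). -/
def precise (f : En n → En n) (x : En n) : En n :=
  (EuclideanSpace.equiv (Fin n) ℝ).symm
    (fun i => Filter.limsup (fun r => ⨍ y in ball x r, f y i) (𝓝[>] 0))

/-- Centered Hardy–Littlewood maximal function of `u : ℝⁿ → ℝ`. -/
def maxFn (u : En n → ℝ) (x : En n) : ℝ≥0∞ :=
  ⨆ (r : ℝ) (_ : 0 < r), (volume (ball x r))⁻¹ * ∫⁻ y in ball x r, ‖u y‖₊

/-- Centered Hardy–Littlewood maximal function of `ρ : ℝⁿ → ℝ≥0∞`. -/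
def maxFn' (ρ : En n → ℝ≥0∞) (x : En n) : ℝ≥0∞ :=
  ⨆ (r : ℝ) (_ : 0 < r), (volume (ball x r))⁻¹ * ∫⁻ y in ball x r, ρ y

open ContinuousLinearMap in
/-- Mollification of `u` by the normalised bump function `b`. -/
def mollify {F : Type*} [NormedAddCommGroup F] [NormedSpace ℝ F]
    (b : ContDiffBump (0 : En n)) (u : En n → F) : En n → F :=
  convolution (b.normed volume) u (lsmul ℝ ℝ) volume

section Mollify

variable {F : Type*} [NormedAddCommGroup F] [NormedSpace ℝ F] (b : ContDiffBump (0 : En n))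

theorem mollify_apply (u : En n → F) (x : En n) :
    mollify b u x = ∫ y, b.normed volume y • u (x - y) := rfl

theorem mollify_apply_swap (u : En n → F) (x : En n) :
    mollify b u x = ∫ y, b.normed volume (x - y) • u y := by
  rw [mollify, convolution_eq_swap]; rfl

theorem integrable_mollify {u : En n → F} (hu : Integrable u) : Integrable (mollify b u) :=
  b.integrable_normed.integrable_convolution _ hu

theorem convolutionExistsAt_mollify {u : En n → F} (hu : Integrable u) (x : En n) :
    Integrable (fun y => b.normed volume (x - y) • u y) := by
  obtain ⟨C, hC⟩ := b.hasCompactSupport_normed.exists_bound_of_continuous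
    (b.continuous_normed (μ := volume))
  refine hu.bdd_smul C ?_ (ae_of_all _ fun y => hC _)
  exact (b.continuous_normed.comp (continuous_const.sub continuous_id)).aestronglyMeasurable

theorem integral_mollify [CompleteSpace F] {u : En n → F} (hu : Integrable u) :
    ∫ x, mollify b u x = ∫ x, u x := by
  rw [mollify, integral_convolution _ b.integrable_normed hu, b.integral_normed]
  simp

theorem norm_mollify_le (u : En n → F) (x : En n) :
    ‖mollify b u x‖ ≤ mollify b (fun y => ‖u y‖) x := by
  rw [mollify_apply, mollify_apply]
  refine (norm_integral_le_integral_norm _).trans_eq (integral_congr_ae (ae_of_all _ fun y => ?_))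
  simp [norm_smul, abs_of_nonneg (b.nonneg_normed y)]

theorem integral_norm_mollify_le {u : En n → F} (hu : Integrable u) :
    ∫ x, ‖mollify b u x‖ ≤ ∫ x, ‖u x‖ := by
  rw [← integral_mollify b hu.norm]
  exact integral_mono (integrable_mollify b hu).norm (integrable_mollify b hu.norm)
    (norm_mollify_le b u)

theorem mollify_sub {u w : En n → F} (hu : Integrable u) (hw : Integrable w) (x : En n) :
    mollify b (fun y => u y - w y) x = mollify b u x - mollify b w x := by
  simp only [mollify_apply_swap, smul_sub]
  exact integral_sub (convolutionExistsAt_mollify b hu x) (convolutionExistsAt_mollify b hw x)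

theorem mollify_mono {u w : En n → ℝ} (hu : Integrable u) (hw : Integrable w)
    (h : ∀ x, u x ≤ w x) (x : En n) : mollify b u x ≤ mollify b w x := by
  simp only [mollify_apply_swap]
  refine integral_mono (convolutionExistsAt_mollify b hu x) (convolutionExistsAt_mollify b hw x) ?_
  exact fun y => mul_le_mul_of_nonneg_left (h y) (b.nonneg_normed _)

theorem mollify_nonneg {u : En n → ℝ} (h : ∀ x, 0 ≤ u x) (x : En n) : 0 ≤ mollify b u x := by
  rw [mollify_apply]
  exact integral_nonneg fun y => mul_nonneg (b.nonneg_normed _) (h _)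

theorem contDiff_mollify {u : En n → F} [CompleteSpace F] (hu : Integrable u) :
    ContDiff ℝ 1 (mollify b u) :=
  b.hasCompactSupport_normed.contDiff_convolution_left _ (n := 1) b.contDiff_normed
    hu.locallyIntegrable

theorem contDiff_normed_one : ContDiff ℝ 1 (b.normed (volume : Measure (En n))) :=
  b.contDiff_normed (n := 1)

theorem integrable_fderiv_normed :
    Integrable (fderiv ℝ (b.normed (volume : Measure (En n)))) :=
  ((contDiff_normed_one b).continuous_fderiv one_ne_zero).integrable_of_hasCompactSupport
    (b.hasCompactSupport_normed.fderiv ℝ)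

theorem fderiv_mollify_eq {u : En n → ℝ} (hu : Integrable u) (x : En n) :
    fderiv ℝ (mollify b u) x = convolution (fderiv ℝ (b.normed volume)) u
      ((ContinuousLinearMap.lsmul ℝ ℝ : ℝ →L[ℝ] ℝ →L[ℝ] ℝ).precompL (En n)) volume x :=
  (b.hasCompactSupport_normed.hasFDerivAt_convolution_left _ (contDiff_normed_one b)
    hu.locallyIntegrable x).fderiv

theorem fderiv_mollify_apply {u : En n → ℝ} (hu : Integrable u) (x v : En n) :
    fderiv ℝ (mollify b u) x v = ∫ y, u y * fderiv ℝ (b.normed volume) (x - y) v := by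
  rw [fderiv_mollify_eq b hu, convolution_eq_swap, ContinuousLinearMap.integral_apply]
  · simp [mul_comm]
  · have := ((b.hasCompactSupport_normed (μ := volume)).fderiv ℝ).convolutionExists_left
      ((ContinuousLinearMap.lsmul ℝ ℝ : ℝ →L[ℝ] ℝ →L[ℝ] ℝ).precompL (En n))
      ((contDiff_normed_one b).continuous_fderiv one_ne_zero) hu.locallyIntegrable x
    exact this.integrable_swap

theorem integrable_fderiv_mollify {u : En n → ℝ} (hu : Integrable u) :
    Integrable (fderiv ℝ (mollify b u)) := by
  rw [funext (fderiv_mollify_eq b hu)]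
  exact (integrable_fderiv_normed b).integrable_convolution _ hu

theorem norm_fderiv_mollify_le {u : En n → ℝ} (hu : Integrable u) (x : En n) :
    ‖fderiv ℝ (mollify b u) x‖ ≤ ∫ y, ‖fderiv ℝ (b.normed volume) (x - y)‖ * |u y| := by
  rw [fderiv_mollify_eq b hu, convolution_eq_swap]
  refine norm_integral_le_of_norm_le ?_ (ae_of_all _ fun y => ?_)
  · obtain ⟨C, hC⟩ := (b.hasCompactSupport_normed.fderiv ℝ).exists_bound_of_continuous
      ((contDiff_normed_one b).continuous_fderiv one_ne_zero)
    refine Integrable.bdd_mul (c := C) hu.abs ?_ (ae_of_all _ fun y => by simpa using hC _)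
    exact (((contDiff_normed_one b).continuous_fderiv one_ne_zero).comp
      (continuous_const.sub continuous_id)).norm.aestronglyMeasurable
  · refine ContinuousLinearMap.opNorm_le_bound _ (by positivity) fun v => ?_
    simp only [ContinuousLinearMap.precompL_apply, ContinuousLinearMap.lsmul_apply, norm_smul]
    rw [mul_right_comm]
    exact mul_le_mul_of_nonneg_right (ContinuousLinearMap.le_opNorm _ _) (norm_nonneg _)

theorem integral_norm_fderiv_mollify_le {u : En n → ℝ} (hu : Integrable u) :
    ∫ x, ‖fderiv ℝ (mollify b u) x‖ ≤
      (∫ x, ‖fderiv ℝ (b.normed volume) x‖) * ∫ x, |u x| := by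
  have key := integral_convolution (μ := volume) (ν := volume) (ContinuousLinearMap.mul ℝ ℝ)
    (integrable_fderiv_normed b).norm hu.abs
  rw [ContinuousLinearMap.mul_apply'] at key
  rw [← key]
  refine integral_mono (integrable_fderiv_mollify b hu).norm
    ((integrable_fderiv_normed b).norm.integrable_convolution _ hu.abs) fun x => ?_
  rw [convolution_eq_swap]
  exact norm_fderiv_mollify_le b hu x

theorem exists_lipschitzWith_mollify {u : En n → ℝ} (hu : Integrable u) :
    ∃ K, LipschitzWith K (mollify b u) := by
  obtain ⟨C, hC⟩ := (b.hasCompactSupport_normed.fderiv ℝ).exists_bound_of_continuous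
    ((contDiff_normed_one b).continuous_fderiv one_ne_zero)
  have hC0 : 0 ≤ C := (norm_nonneg _).trans (hC 0)
  refine ⟨(C * ∫ y, |u y|).toNNReal, lipschitzWith_of_nnnorm_fderiv_le
    ((contDiff_mollify b hu).differentiable one_ne_zero) fun x => ?_⟩
  rw [← NNReal.coe_le_coe, coe_nnnorm, Real.coe_toNNReal _ (by positivity), ← integral_const_mul]
  refine (norm_fderiv_mollify_le b hu x).trans (integral_mono_of_nonneg
    (ae_of_all _ fun y => by positivity) (hu.abs.const_mul C) (ae_of_all _ fun y => ?_))
  exact mul_le_mul_of_nonneg_right (hC _) (abs_nonneg _)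

/-- Scheffé's lemma for mollifications. -/
theorem tendsto_integral_norm_mollify_sub [CompleteSpace F] {u : En n → F} (hu : Integrable u)
    {φ : ℕ → ContDiffBump (0 : En n)} {K : ℝ} (hφ : Tendsto (fun i ↦ (φ i).rOut) atTop (𝓝 0))
    (h'φ : ∀ i, (φ i).rOut ≤ K * (φ i).rIn) :
    Tendsto (fun i => ∫ x, ‖mollify (φ i) u x - u x‖) atTop (𝓝 0) := by
  have hae := ContDiffBump.ae_convolution_tendsto_right_of_locallyIntegrable (μ := volume) hφ
    (Eventually.of_forall h'φ) hu.locallyIntegrable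
  set a : ℕ → En n → ℝ := fun i x => ‖u x‖ + ‖mollify (φ i) u x‖ - ‖mollify (φ i) u x - u x‖
  have ha0 : ∀ i x, 0 ≤ a i x := fun i x => by
    have := norm_sub_le (mollify (φ i) u x) (u x)
    simp only [a]; linarith
  have hai : ∀ i, Integrable (a i) := fun i =>
    (hu.norm.add (integrable_mollify _ hu).norm).sub ((integrable_mollify _ hu).sub hu).norm
  have halim : ∀ᵐ x, Tendsto (fun i => a i x) atTop (𝓝 (2 * ‖u x‖)) := by
    filter_upwards [hae] with x hx
    have hx' : Tendsto (fun i => mollify (φ i) u x) atTop (𝓝 (u x)) := hx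
    have := (tendsto_const_nhds (x := ‖u x‖)).add hx'.norm |>.sub
      (hx'.sub (tendsto_const_nhds (x := u x))).norm
    simpa [a, two_mul] using this
  have hfatou : ∫⁻ x, ENNReal.ofReal (2 * ‖u x‖) ≤
      liminf (fun i => ∫⁻ x, ENNReal.ofReal (a i x)) atTop := by
    refine le_trans (lintegral_mono_ae ?_) (lintegral_liminf_le' fun i =>
      (hai i).aestronglyMeasurable.aemeasurable.ennreal_ofReal)
    filter_upwards [halim] with x hx
    exact ((ENNReal.continuous_ofReal.tendsto _).comp hx).liminf_eq.ge
  have hI : ∀ i, ∫⁻ x, ENNReal.ofReal (a i x) = ENNReal.ofReal (∫ x, a i x) := fun i =>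
    (ofReal_integral_eq_lintegral_ofReal (hai i) (ae_of_all _ (ha0 i))).symm
  simp only [hI] at hfatou
  rw [← ofReal_integral_eq_lintegral_ofReal (hu.norm.const_mul 2)
    (ae_of_all _ fun x => by positivity), integral_const_mul] at hfatou
  have hval : ∀ i, ∫ x, a i x = (∫ x, ‖u x‖) + (∫ x, ‖mollify (φ i) u x‖) -
      ∫ x, ‖mollify (φ i) u x - u x‖ := fun i =>
    (integral_sub (hu.norm.add (integrable_mollify _ hu).norm)
      ((integrable_mollify _ hu).sub hu).norm).trans
      (congrArg (· - _) (integral_add hu.norm (integrable_mollify _ hu).norm))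
  refine Metric.tendsto_atTop.2 fun ε hε => ?_
  by_cases hz : ∫ x, ‖u x‖ = 0
  · refine ⟨0, fun i _ => ?_⟩
    have h1 := integral_norm_mollify_le (φ i) hu
    have h2 : 0 ≤ ∫ x, a i x := integral_nonneg (ha0 i)
    rw [hval i] at h2
    rw [Real.dist_eq, sub_zero, abs_of_nonneg (integral_nonneg fun x => norm_nonneg _)]
    linarith
  have hpos : 0 < ∫ x, ‖u x‖ := lt_of_le_of_ne (integral_nonneg fun x => norm_nonneg _) (Ne.symm hz)
  have hlt : ENNReal.ofReal (2 * (∫ x, ‖u x‖) - ε) <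
      liminf (fun i => ENNReal.ofReal (∫ x, a i x)) atTop :=
    lt_of_lt_of_le ((ENNReal.ofReal_lt_ofReal_iff (by positivity)).2 (by linarith)) hfatou
  obtain ⟨N, hN⟩ := eventually_atTop.1 (eventually_lt_of_lt_liminf hlt)
  refine ⟨N, fun i hi => ?_⟩
  have h1 := integral_norm_mollify_le (φ i) hu
  have h2 := (ENNReal.ofReal_lt_ofReal_iff'.1 (hN i hi)).1
  rw [hval i] at h2
  rw [Real.dist_eq, sub_zero, abs_of_nonneg (integral_nonneg fun x => norm_nonneg _)]
  linarith

end Mollify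

/-- `u` is an integrable function with integrable weak gradient `g`. -/
structure IsSobolev (u : En n → ℝ) (g : En n → (En n →L[ℝ] ℝ)) : Prop where
  integrable : Integrable u
  integrable_grad : Integrable g
  isWeakGrad : IsWeakGrad u g

/-- The `W^{1,1}` norm of a function `u` with weak gradient `g`. -/
def sobolevNorm (u : En n → ℝ) (g : En n → (En n →L[ℝ] ℝ)) : ℝ :=
  (∫ x, |u x|) + ∫ x, ‖g x‖

section WeakGradient

variable {u w : En n → ℝ} {g h : En n → (En n →L[ℝ] ℝ)} {φ : En n → ℝ}

theorem continuous_fderiv_apply_of_contDiff (hφ : ContDiff ℝ 1 φ) (v : En n) :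
    Continuous fun x => fderiv ℝ φ x v :=
  (hφ.continuous_fderiv one_ne_zero).clm_apply continuous_const

theorem hasCompactSupport_fderiv_apply (hc : HasCompactSupport φ) (v : En n) :
    HasCompactSupport fun x => fderiv ℝ φ x v :=
  (hc.fderiv ℝ).comp_left (g := fun L : En n →L[ℝ] ℝ => L v) rfl

theorem integrable_mul_fderiv_test (hu : LocallyIntegrable u) (hφ : ContDiff ℝ 1 φ)
    (hc : HasCompactSupport φ) (v : En n) : Integrable fun x => u x * fderiv ℝ φ x v := by
  simpa [mul_comm] using hu.integrable_smul_left_of_hasCompactSupport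
    (continuous_fderiv_apply_of_contDiff hφ v) (hasCompactSupport_fderiv_apply hc v)

theorem locallyIntegrable_apply (hg : LocallyIntegrable g) (v : En n) :
    LocallyIntegrable fun x => g x v := by
  intro x
  obtain ⟨s, hs, hi⟩ := hg x
  exact ⟨s, hs, (ContinuousLinearMap.apply ℝ ℝ v).integrable_comp hi⟩

theorem integrable_apply (hg : Integrable g) (v : En n) : Integrable fun x => g x v :=
  (ContinuousLinearMap.apply ℝ ℝ v).integrable_comp hg

theorem integrable_test_mul (hg : LocallyIntegrable g) (hφ : ContDiff ℝ 1 φ)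
    (hc : HasCompactSupport φ) (v : En n) : Integrable fun x => φ x * g x v :=
  (locallyIntegrable_apply hg v).integrable_smul_left_of_hasCompactSupport hφ.continuous hc

theorem IsWeakGrad.add (hug : IsWeakGrad u g) (hwh : IsWeakGrad w h)
    (hu : LocallyIntegrable u) (hw : LocallyIntegrable w)
    (hg : LocallyIntegrable g) (hh : LocallyIntegrable h) :
    IsWeakGrad (fun x => u x + w x) (fun x => g x + h x) := by
  intro φ hφ hc v
  simp only [add_mul, add_apply, mul_add]
  rw [integral_add (integrable_mul_fderiv_test hu hφ hc v) (integrable_mul_fderiv_test hw hφ hc v),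
    integral_add (integrable_test_mul hg hφ hc v) (integrable_test_mul hh hφ hc v),
    hug φ hφ hc v, hwh φ hφ hc v]
  ring

theorem IsWeakGrad.const_mul (hug : IsWeakGrad u g) (a : ℝ) :
    IsWeakGrad (fun x => a * u x) (fun x => a • g x) := by
  intro φ hφ hc v
  simp only [mul_assoc, smul_apply, smul_eq_mul, mul_left_comm _ a]
  rw [integral_const_mul, integral_const_mul, hug φ hφ hc v, mul_neg]

theorem isWeakGrad_of_contDiff (hu : ContDiff ℝ 1 u) : IsWeakGrad u (fderiv ℝ u) := by
  intro φ hφ hc v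
  have hf := locallyIntegrable_apply (hu.continuous_fderiv one_ne_zero).locallyIntegrable v
  simp only [mul_comm (φ _)]
  refine integral_mul_fderiv_eq_neg_fderiv_mul_of_integrable ?_
    (integrable_mul_fderiv_test hu.continuous.locallyIntegrable hφ hc v) ?_
    (fun x _ => hu.differentiable one_ne_zero x) (fun x _ => hφ.differentiable one_ne_zero x)
  · simpa [mul_comm] using hf.integrable_smul_left_of_hasCompactSupport hφ.continuous hc
  · simpa [mul_comm] using
      hu.continuous.locallyIntegrable.integrable_smul_left_of_hasCompactSupport hφ.continuous hc

theorem isWeakGrad_const (a : ℝ) : IsWeakGrad (fun _ : En n => a) (fun _ => 0) := by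
  have h := isWeakGrad_of_contDiff (contDiff_const (c := a) (E := En n) (𝕜 := ℝ) (n := 1))
  simpa using! h

theorem IsWeakGrad.congr_ae (hug : IsWeakGrad u g) (huw : u =ᵐ[volume] w) :
    IsWeakGrad w g := by
  intro φ hφ hc v
  rw [← hug φ hφ hc v]
  exact integral_congr_ae (huw.mono fun x hx => by simp [hx])

theorem IsWeakGrad.mul_contDiff {ζ : En n → ℝ} (hug : IsWeakGrad u g) (hu : LocallyIntegrable u)
    (hζ : ContDiff ℝ 1 ζ) (hg : LocallyIntegrable g) :
    IsWeakGrad (fun x => u x * ζ x) (fun x => ζ x • g x + u x • fderiv ℝ ζ x) := by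
  intro φ hφ hc v
  have h1 := hug (fun x => ζ x * φ x) (hζ.mul hφ) hc.mul_left v
  have hd : ∀ x, fderiv ℝ (fun x => ζ x * φ x) x v =
      ζ x * fderiv ℝ φ x v + φ x * fderiv ℝ ζ x v := fun x => by
    rw [fderiv_fun_mul (hζ.differentiable one_ne_zero x) (hφ.differentiable one_ne_zero x)]
    simp
  have hi1 : Integrable fun x => u x * (φ x * fderiv ℝ ζ x v) := by
    have := hu.integrable_smul_left_of_hasCompactSupport
      (hφ.continuous.mul (continuous_fderiv_apply_of_contDiff hζ v)) hc.mul_right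
    simpa [mul_comm] using this
  have hi2 : Integrable fun x => u x * (ζ x * fderiv ℝ φ x v) := by
    have := hu.integrable_smul_left_of_hasCompactSupport
      (hζ.continuous.mul (continuous_fderiv_apply_of_contDiff hφ v))
      (hasCompactSupport_fderiv_apply hc v).mul_left
    simpa [mul_comm] using this
  have hi3 : Integrable fun x => ζ x * φ x * g x v :=
    integrable_test_mul hg (hζ.mul hφ) hc.mul_left v
  simp only [hd, mul_add] at h1
  rw [integral_add hi2 hi1] at h1
  have e1 : ∀ x, u x * ζ x * fderiv ℝ φ x v = u x * (ζ x * fderiv ℝ φ x v) := fun x => by ring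
  have e2 : ∀ x, φ x * (ζ x • g x + u x • fderiv ℝ ζ x) v =
      ζ x * φ x * g x v + u x * (φ x * fderiv ℝ ζ x v) := fun x => by
    simp only [add_apply, smul_apply, smul_eq_mul]; ring
  simp only [e1, e2]
  rw [integral_add hi3 hi1]
  linarith

theorem IsSobolev.fderiv_mollify (hug : IsSobolev u g) (b : ContDiffBump (0 : En n)) (x : En n) :
    fderiv ℝ (mollify b u) x = mollify b g x := by
  ext v
  have hρ : ContDiff ℝ 1 fun y => b.normed (volume : Measure (En n)) (x - y) :=
    (contDiff_normed_one b).comp (contDiff_const.sub contDiff_id)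
  have hρc : HasCompactSupport fun y => b.normed (volume : Measure (En n)) (x - y) :=
    b.hasCompactSupport_normed.comp_homeomorph (Homeomorph.subLeft x)
  have hd : ∀ y, fderiv ℝ (fun y => b.normed (volume : Measure (En n)) (x - y)) y v =
      - fderiv ℝ (b.normed volume) (x - y) v := fun y => by
    have h1 := ((contDiff_normed_one b).differentiable one_ne_zero (x - y)).hasFDerivAt.comp y
      ((hasFDerivAt_id y).const_sub x)
    have := congrArg (fun L : En n →L[ℝ] ℝ => L v) h1.fderiv
    simpa using! this
  have key := hug.isWeakGrad _ hρ hρc v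
  simp only [hd, mul_neg, integral_neg, neg_inj] at key
  rw [fderiv_mollify_apply b hug.integrable, key, mollify_apply_swap,
    ContinuousLinearMap.integral_apply (convolutionExistsAt_mollify b hug.integrable_grad x)]
  simp

/-- A sequence of bump functions with radii tending to zero. -/
def bumpSeq (i : ℕ) : ContDiffBump (0 : En n) where
  rIn := 1 / ((i : ℝ) + 1)
  rOut := 2 * (1 / ((i : ℝ) + 1))
  rIn_pos := by positivity
  rIn_lt_rOut := by
    have : 0 < 1 / ((i : ℝ) + 1) := by positivity
    linarith

theorem tendsto_bumpSeq_rOut : Tendsto (fun i => (bumpSeq i : ContDiffBump (0 : En n)).rOut)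
    atTop (𝓝 0) := by
  simpa [bumpSeq] using! (tendsto_one_div_add_atTop_nhds_zero_nat (𝕜 := ℝ)).const_mul 2

theorem tendsto_mollify_bumpSeq_ae {F : Type*} [NormedAddCommGroup F] [NormedSpace ℝ F]
    [CompleteSpace F] {f : En n → F} (hf : Integrable f) :
    ∀ᵐ x, Tendsto (fun i => mollify (bumpSeq i) f x) atTop (𝓝 (f x)) :=
  ContDiffBump.ae_convolution_tendsto_right_of_locallyIntegrable (K := 2) (μ := volume)
    tendsto_bumpSeq_rOut (Eventually.of_forall fun _ => le_rfl) hf.locallyIntegrable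

theorem tendsto_integral_mollify_bumpSeq_sub {F : Type*} [NormedAddCommGroup F] [NormedSpace ℝ F]
    [CompleteSpace F] {f : En n → F} (hf : Integrable f) :
    Tendsto (fun i => ∫ x, ‖mollify (bumpSeq i) f x - f x‖) atTop (𝓝 0) :=
  tendsto_integral_norm_mollify_sub (K := 2) hf tendsto_bumpSeq_rOut fun _ => le_rfl

theorem exists_bound_of_test (hφ : ContDiff ℝ 1 φ) (hc : HasCompactSupport φ) (v : En n) :
    ∃ C, 0 ≤ C ∧ (∀ x, |φ x| ≤ C) ∧ ∀ x, |fderiv ℝ φ x v| ≤ C := by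
  obtain ⟨C₁, h₁⟩ := hc.exists_bound_of_continuous hφ.continuous
  obtain ⟨C₂, h₂⟩ := (hasCompactSupport_fderiv_apply hc v).exists_bound_of_continuous
    (continuous_fderiv_apply_of_contDiff hφ v)
  exact ⟨max C₁ C₂, (norm_nonneg _).trans ((h₁ 0).trans (le_max_left _ _)),
    fun x => (h₁ x).trans (le_max_left _ _), fun x => (h₂ x).trans (le_max_right _ _)⟩

/-- Chain rule for weak gradients. -/
theorem IsSobolev.comp_contDiff (hug : IsSobolev u g) {f : ℝ → ℝ} (hf : ContDiff ℝ 1 f)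
    (hf' : ∀ s, |deriv f s| ≤ 1) :
    IsWeakGrad (fun x => f (u x)) (fun x => deriv f (u x) • g x) := by
  intro φ hφ hc v
  obtain ⟨C, hC0, hC1, hC2⟩ := exists_bound_of_test hφ hc v
  have hlip : ∀ s t, |f s - f t| ≤ |s - t| := fun s t => by
    have hL : LipschitzWith 1 f := lipschitzWith_of_nnnorm_deriv_le
      (hf.differentiable one_ne_zero) fun s => by
        rw [← NNReal.coe_le_coe]; simpa using hf' s
    simpa [Real.dist_eq] using hL.dist_le_mul s t
  have hf'c : Continuous (deriv f) := hf.continuous_deriv le_rfl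
  set U : ℕ → En n → ℝ := fun i => mollify (bumpSeq i) u with hU
  set G : ℕ → En n → (En n →L[ℝ] ℝ) := fun i => mollify (bumpSeq i) g with hG
  have hUc : ∀ i, ContDiff ℝ 1 (U i) := fun i => contDiff_mollify _ hug.integrable
  have hUi : ∀ i, Integrable (U i) := fun i => integrable_mollify _ hug.integrable
  have hGi : ∀ i, Integrable (G i) := fun i => integrable_mollify _ hug.integrable_grad
  have hUae := tendsto_mollify_bumpSeq_ae hug.integrable
  have hU1 := tendsto_integral_mollify_bumpSeq_sub hug.integrable
  have hG1 := tendsto_integral_mollify_bumpSeq_sub hug.integrable_grad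
  have hbdd : ∀ {w : En n → ℝ} (i : ℕ), Integrable w → Integrable fun x => deriv f (U i x) * w x :=
    fun i hw => hw.bdd_mul (c := 1) (hf'c.comp (hUc i).continuous).aestronglyMeasurable
      (ae_of_all _ fun x => hf' _)
  have huloc : LocallyIntegrable fun x => f (u x) := by
    have : Integrable fun x => f (u x) - f 0 :=
      hug.integrable.mono ((hf.continuous.comp_aestronglyMeasurable
        hug.integrable.aestronglyMeasurable).sub aestronglyMeasurable_const)
        (ae_of_all _ fun x => by simpa using hlip (u x) 0)
    have e : (fun x => f (u x)) = (fun x => f (u x) - f 0) + fun _ => f 0 := by ext x; simp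
    rw [e]
    exact this.locallyIntegrable.add (locallyIntegrable_const (f 0))
  have hclassical : ∀ i, ∫ x, f (U i x) * fderiv ℝ φ x v =
      - ∫ x, φ x * (deriv f (U i x) * G i x v) := fun i => by
    rw [isWeakGrad_of_contDiff (u := fun x => f (U i x)) (hf.comp (hUc i)) φ hφ hc v]
    congr 1
    refine integral_congr_ae (ae_of_all _ fun x => ?_)
    have : fderiv ℝ (fun x => f (U i x)) x = deriv f (U i x) • fderiv ℝ (U i) x :=
      ((hf.differentiable one_ne_zero (U i x)).hasDerivAt.comp_hasFDerivAt x
        ((hUc i).differentiable one_ne_zero x).hasFDerivAt).fderiv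
    change φ x * fderiv ℝ (fun x => f (U i x)) x v = _
    rw [this, smul_apply, smul_eq_mul, hug.fderiv_mollify]
  have hL : Tendsto (fun i => ∫ x, f (U i x) * fderiv ℝ φ x v) atTop
      (𝓝 (∫ x, f (u x) * fderiv ℝ φ x v)) := by
    rw [tendsto_iff_norm_sub_tendsto_zero]
    refine squeeze_zero (fun i => norm_nonneg _) (fun i => ?_)
      (by simpa using! hU1.mul_const C)
    rw [← integral_sub (integrable_mul_fderiv_test (u := fun x => f (U i x))
      (hf.continuous.comp (hUc i).continuous).locallyIntegrable hφ hc v)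
      (integrable_mul_fderiv_test huloc hφ hc v), ← integral_mul_const]
    refine norm_integral_le_of_norm_le (((hUi i).sub hug.integrable).norm.mul_const C)
      (ae_of_all _ fun x => ?_)
    rw [← sub_mul, norm_mul]
    exact mul_le_mul (hlip _ _) (hC2 x) (abs_nonneg _) (abs_nonneg _)
  have hmain : Tendsto (fun i => ∫ x, φ x * (deriv f (U i x) * g x v)) atTop
      (𝓝 (∫ x, φ x * (deriv f (u x) * g x v))) := by
    refine tendsto_integral_of_dominated_convergence (fun x => C * |g x v|) (fun i => ?_)
      ((integrable_apply hug.integrable_grad v).abs.const_mul C)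
      (fun i => ae_of_all _ fun x => ?_) ?_
    · exact hφ.continuous.aestronglyMeasurable.mul
        (hbdd i (integrable_apply hug.integrable_grad v)).aestronglyMeasurable
    · rw [norm_mul, norm_mul]
      refine mul_le_mul (hC1 x) ?_ (by positivity) hC0
      simpa using mul_le_mul_of_nonneg_right (hf' (U i x)) (abs_nonneg (g x v))
    · filter_upwards [hUae] with x hx
      exact (((hf'c.tendsto _).comp hx).mul_const _).const_mul _
  have hR : Tendsto (fun i => ∫ x, φ x * (deriv f (U i x) * G i x v)) atTop
      (𝓝 (∫ x, φ x * (deriv f (u x) * g x v))) := by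
    have hdiff : Tendsto (fun i => (∫ x, φ x * (deriv f (U i x) * G i x v)) -
        ∫ x, φ x * (deriv f (U i x) * g x v)) atTop (𝓝 0) := by
      rw [tendsto_zero_iff_norm_tendsto_zero]
      refine squeeze_zero (fun i => norm_nonneg _) (fun i => ?_)
        (by simpa using! hG1.mul_const (C * ‖v‖))
      have hφb : ∀ {w : En n → ℝ}, Integrable w → Integrable fun x => φ x * w x :=
        fun hw => hw.bdd_mul (c := C) hφ.continuous.aestronglyMeasurable (ae_of_all _ hC1)
      rw [← integral_sub (hφb (hbdd i (integrable_apply (hGi i) v)))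
        (hφb (hbdd i (integrable_apply hug.integrable_grad v))), ← integral_mul_const]
      refine norm_integral_le_of_norm_le
        (((hGi i).sub hug.integrable_grad).norm.mul_const _) (ae_of_all _ fun x => ?_)
      have e : φ x * (deriv f (U i x) * G i x v) - φ x * (deriv f (U i x) * g x v) =
          φ x * (deriv f (U i x) * (G i x - g x) v) := by
        simp only [sub_apply]; ring
      rw [e, norm_mul, norm_mul]
      have h1 := (G i x - g x).le_opNorm v
      have h2 := hf' (U i x)
      have h3 := hC1 x
      simp only [Real.norm_eq_abs] at *
      calc |φ x| * (|deriv f (U i x)| * |(G i x - g x) v|)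
          ≤ C * (1 * (‖G i x - g x‖ * ‖v‖)) := by gcongr
        _ = ‖G i x - g x‖ * (C * ‖v‖) := by ring
    simpa using hdiff.add hmain
  simp only [hclassical] at hL
  have := tendsto_nhds_unique hL hR.neg
  simpa [smul_apply] using this

theorem abs_real_sign_le (s : ℝ) : |Real.sign s| ≤ 1 := by
  rcases Real.sign_apply_eq s with h | h | h <;> simp [h]

theorem measurable_real_sign : Measurable Real.sign :=
  Measurable.ite measurableSet_Iio measurable_const
    (Measurable.ite measurableSet_Ioi measurable_const measurable_const)

/-- Weak gradient of the absolute value. -/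
theorem IsSobolev.isWeakGrad_abs_sub (hug : IsSobolev u g) (c : ℝ) :
    IsWeakGrad (fun x => |u x - c|) (fun x => Real.sign (u x - c) • g x) := by
  intro φ hφ hc v
  obtain ⟨C, hC0, hC1, hC2⟩ := exists_bound_of_test hφ hc v
  set e : ℕ → ℝ := fun k => 1 / ((k : ℝ) + 1) with he
  have he0 : ∀ k, 0 < e k := fun k => by positivity
  have he1 : ∀ k, e k ≤ 1 := fun k => by
    rw [he]; exact (div_le_one (by positivity)).2 (by linarith [k.cast_nonneg (α := ℝ)])
  have helim : Tendsto e atTop (𝓝 0) := tendsto_one_div_add_atTop_nhds_zero_nat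
  have hpos : ∀ k s, 0 < (s - c) ^ 2 + e k ^ 2 := fun k s => by have := he0 k; positivity
  set f : ℕ → ℝ → ℝ := fun k s => √((s - c) ^ 2 + e k ^ 2) with hfdef
  have hfd : ∀ k s, HasDerivAt (f k) ((s - c) / √((s - c) ^ 2 + e k ^ 2)) s := fun k s => by
    have h1 : HasDerivAt (fun s : ℝ => (s - c) ^ 2 + e k ^ 2) (2 * (s - c)) s := by
      simpa using (((hasDerivAt_id s).sub_const c).pow 2).add_const (e k ^ 2)
    convert h1.sqrt (hpos k s).ne' using 1
    rw [mul_div_mul_left _ _ two_ne_zero]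
  have hderiv : ∀ k s, deriv (f k) s = (s - c) / √((s - c) ^ 2 + e k ^ 2) :=
    fun k s => (hfd k s).deriv
  have hfC : ∀ k, ContDiff ℝ 1 (f k) := fun k =>
    ContDiff.sqrt (by fun_prop) fun s => (hpos k s).ne'
  have hf' : ∀ k s, |deriv (f k) s| ≤ 1 := fun k s => by
    rw [hderiv, abs_div, abs_of_nonneg (Real.sqrt_nonneg _)]
    refine (div_le_one (Real.sqrt_pos.2 (hpos k s))).2 (Real.abs_le_sqrt ?_)
    nlinarith [sq_nonneg (e k)]
  have hfeq := fun k => hug.comp_contDiff (hfC k) (hf' k) φ hφ hc v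
  have hum := hug.integrable.aestronglyMeasurable
  have hgm := (integrable_apply hug.integrable_grad v)
  have hL : Tendsto (fun k => ∫ x, f k (u x) * fderiv ℝ φ x v) atTop
      (𝓝 (∫ x, |u x - c| * fderiv ℝ φ x v)) := by
    have hloc : LocallyIntegrable fun x => |u x - c| + 1 := by
      have h := hug.integrable.locallyIntegrable.sub (locallyIntegrable_const c)
      exact LocallyIntegrable.add (fun x => (h x).norm) (locallyIntegrable_const 1)
    refine tendsto_integral_of_dominated_convergence
      (fun x => ‖(|u x - c| + 1) * fderiv ℝ φ x v‖) (fun k => ?_)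
      (integrable_mul_fderiv_test hloc hφ hc v).norm (fun k => ae_of_all _ fun x => ?_)
      (ae_of_all _ fun x => ?_)
    · exact ((hfC k).continuous.comp_aestronglyMeasurable hum).mul
        (continuous_fderiv_apply_of_contDiff hφ v).aestronglyMeasurable
    · rw [norm_mul, norm_mul]
      refine mul_le_mul_of_nonneg_right ?_ (norm_nonneg _)
      rw [Real.norm_of_nonneg (Real.sqrt_nonneg _), Real.norm_of_nonneg (by positivity)]
      refine Real.sqrt_le_iff.2 ⟨by positivity, ?_⟩
      nlinarith [sq_abs (u x - c), abs_nonneg (u x - c), he0 k, he1 k]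
    · refine Tendsto.mul_const _ ?_
      have : Tendsto (fun k => √((u x - c) ^ 2 + e k ^ 2)) atTop (𝓝 √((u x - c) ^ 2 + 0 ^ 2)) :=
        ((tendsto_const_nhds.add (helim.pow 2)).sqrt)
      simpa [Real.sqrt_sq_eq_abs] using this
  have hR : Tendsto (fun k => ∫ x, φ x * (deriv (f k) (u x) • g x) v) atTop
      (𝓝 (∫ x, φ x * (Real.sign (u x - c) • g x) v)) := by
    simp only [smul_apply, smul_eq_mul]
    refine tendsto_integral_of_dominated_convergence (fun x => C * |g x v|) (fun k => ?_)
      (hgm.abs.const_mul C) (fun k => ae_of_all _ fun x => ?_) (ae_of_all _ fun x => ?_)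
    · exact hφ.continuous.aestronglyMeasurable.mul
        ((((hfC k).continuous_deriv le_rfl).comp_aestronglyMeasurable hum).mul
          hgm.aestronglyMeasurable)
    · rw [norm_mul, norm_mul]
      refine mul_le_mul (hC1 x) ?_ (by positivity) hC0
      simpa using mul_le_mul_of_nonneg_right (hf' k (u x)) (abs_nonneg (g x v))
    · refine Tendsto.const_mul _ (Tendsto.mul_const _ ?_)
      simp only [hderiv]
      rcases eq_or_ne (u x - c) 0 with h0 | h0
      · simp [h0]
      · have h1 : Tendsto (fun k => (u x - c) / √((u x - c) ^ 2 + e k ^ 2)) atTop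
            (𝓝 ((u x - c) / √((u x - c) ^ 2 + 0 ^ 2))) :=
          tendsto_const_nhds.div (tendsto_const_nhds.add (helim.pow 2)).sqrt
            (by simpa [Real.sqrt_sq_eq_abs] using h0)
        have h2 : (u x - c) / √((u x - c) ^ 2 + 0 ^ 2) = Real.sign (u x - c) := by
          rw [zero_pow two_ne_zero, add_zero, Real.sqrt_sq_eq_abs]
          rcases lt_or_gt_of_ne h0 with h | h
          · rw [Real.sign_of_neg h, abs_of_neg h, div_neg, div_self h0]
          · rw [Real.sign_of_pos h, abs_of_pos h, div_self h0]
        rwa [h2] at h1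
  simp only [hfeq] at hL
  exact tendsto_nhds_unique hL hR.neg

end WeakGradient

section Lattice

variable {u w : En n → ℝ} {g h : En n → (En n →L[ℝ] ℝ)}

theorem IsWeakGrad.congr (hug : IsWeakGrad u g) (huw : ∀ x, w x = u x) (hgh : ∀ x, h x = g x) :
    IsWeakGrad w h := by
  rwa [funext huw, funext hgh]

theorem IsSobolev.congr_ae (hug : IsSobolev u g) (huw : u =ᵐ[volume] w) : IsSobolev w g :=
  ⟨hug.integrable.congr huw, hug.integrable_grad, hug.isWeakGrad.congr_ae huw⟩

theorem IsSobolev.const_mul (hug : IsSobolev u g) (a : ℝ) :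
    IsSobolev (fun x => a * u x) (fun x => a • g x) :=
  ⟨hug.integrable.const_mul a, hug.integrable_grad.smul a, hug.isWeakGrad.const_mul a⟩

theorem IsSobolev.add (hug : IsSobolev u g) (hwh : IsSobolev w h) :
    IsSobolev (fun x => u x + w x) (fun x => g x + h x) :=
  ⟨hug.integrable.add hwh.integrable,
    Integrable.add (f := g) (g := h) hug.integrable_grad hwh.integrable_grad,
    hug.isWeakGrad.add hwh.isWeakGrad hug.integrable.locallyIntegrable
      hwh.integrable.locallyIntegrable hug.integrable_grad.locallyIntegrable
      hwh.integrable_grad.locallyIntegrable⟩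

theorem IsSobolev.sub (hug : IsSobolev u g) (hwh : IsSobolev w h) :
    IsSobolev (fun x => u x - w x) (fun x => g x - h x) := by
  have e1 : (fun x => u x - w x) = fun x => u x + -1 * w x := by ext x; ring
  have e2 : (fun x => g x - h x) = fun x => g x + (-1 : ℝ) • h x := by
    ext x v
    simp only [add_apply, sub_apply, smul_apply, smul_eq_mul]; ring
  rw [e1, e2]
  exact hug.add (hwh.const_mul (-1))

theorem IsSobolev.sign_smul (hug : IsSobolev u g) (hw : AEStronglyMeasurable w) :
    Integrable fun x => Real.sign (w x) • g x :=
  hug.integrable_grad.bdd_smul 1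
    (measurable_real_sign.comp_aemeasurable hw.aemeasurable).aestronglyMeasurable
    (ae_of_all _ fun _ => abs_real_sign_le _)

theorem sobolevNorm_nonneg (u : En n → ℝ) (g : En n → (En n →L[ℝ] ℝ)) : 0 ≤ sobolevNorm u g :=
  add_nonneg (integral_nonneg fun _ => abs_nonneg _) (integral_nonneg fun _ => norm_nonneg _)

theorem sobolevNorm_const_mul (u : En n → ℝ) (g : En n → (En n →L[ℝ] ℝ)) {a : ℝ} (ha : 0 ≤ a) :
    sobolevNorm (fun x => a * u x) (fun x => a • g x) = a * sobolevNorm u g := by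
  simp [sobolevNorm, abs_mul, norm_smul, integral_const_mul, mul_add, abs_of_nonneg ha]

theorem IsSobolev.sobolevNorm_mono (hug : IsSobolev u g) (hu : ∀ x, |w x| ≤ |u x|)
    (hg : ∀ x, ‖h x‖ ≤ ‖g x‖) : sobolevNorm w h ≤ sobolevNorm u g :=
  add_le_add
    (integral_mono_of_nonneg (ae_of_all _ fun _ => abs_nonneg _) hug.integrable.abs
      (ae_of_all _ hu))
    (integral_mono_of_nonneg (ae_of_all _ fun _ => norm_nonneg _) hug.integrable_grad.norm
      (ae_of_all _ hg))

/-- Weak gradient of the maximum of two functions. -/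
def maxGrad (u w : En n → ℝ) (g h : En n → (En n →L[ℝ] ℝ)) (x : En n) : En n →L[ℝ] ℝ :=
  ((1 + Real.sign (u x - w x)) / 2) • g x + ((1 - Real.sign (u x - w x)) / 2) • h x

/-- Weak gradient of the minimum of two functions. -/
def minGrad (u w : En n → ℝ) (g h : En n → (En n →L[ℝ] ℝ)) (x : En n) : En n →L[ℝ] ℝ :=
  ((1 - Real.sign (u x - w x)) / 2) • g x + ((1 + Real.sign (u x - w x)) / 2) • h x

theorem IsSobolev.max (hug : IsSobolev u g) (hwh : IsSobolev w h) :
    IsSobolev (fun x => max (u x) (w x)) (maxGrad u w g h) := by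
  have hd := hug.sub hwh
  have ha : IsSobolev (fun x => |u x - w x|) (fun x => Real.sign (u x - w x) • (g x - h x)) := by
    refine ⟨hd.integrable.abs, hd.sign_smul hd.integrable.aestronglyMeasurable, ?_⟩
    simpa using hd.isWeakGrad_abs_sub 0
  have hs := ((hug.add hwh).add ha).const_mul (1 / 2)
  have e1 : (fun x => Max.max (u x) (w x)) = fun x => 1 / 2 * (u x + w x + |u x - w x|) := by
    ext x
    rw [← max_sub_min_eq_abs', ← min_add_max (u x) (w x)]; ring
  have e2 : maxGrad u w g h =
      fun x => (1 / 2 : ℝ) • (g x + h x + Real.sign (u x - w x) • (g x - h x)) := by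
    ext x v
    simp only [maxGrad, add_apply, smul_apply, sub_apply, smul_eq_mul]; ring
  rwa [e1, e2]

theorem IsSobolev.min (hug : IsSobolev u g) (hwh : IsSobolev w h) :
    IsSobolev (fun x => min (u x) (w x)) (minGrad u w g h) := by
  have hs := (hug.add hwh).sub (hug.max hwh)
  have e1 : (fun x => Min.min (u x) (w x)) = fun x => u x + w x - Max.max (u x) (w x) := by
    ext x
    rw [← min_add_max (u x) (w x)]; ring
  have e2 : minGrad u w g h = fun x => g x + h x - maxGrad u w g h x := by
    ext x v
    simp only [maxGrad, minGrad, add_apply, smul_apply, sub_apply, smul_eq_mul]; ring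
  rwa [e1, e2]

theorem sobolevNorm_max_add_min_le (hug : IsSobolev u g) (hwh : IsSobolev w h) :
    sobolevNorm (fun x => max (u x) (w x)) (maxGrad u w g h) +
      sobolevNorm (fun x => min (u x) (w x)) (minGrad u w g h) ≤
      sobolevNorm u g + sobolevNorm w h := by
  have hM := hug.max hwh
  have hm := hug.min hwh
  have h1 : (∫ x, |max (u x) (w x)|) + ∫ x, |min (u x) (w x)| = (∫ x, |u x|) + ∫ x, |w x| := by
    rw [← integral_add hM.integrable.abs hm.integrable.abs,
      ← integral_add hug.integrable.abs hwh.integrable.abs]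
    refine integral_congr_ae (ae_of_all _ fun x => ?_)
    rcases le_total (u x) (w x) with hx | hx
    · simp [hx, add_comm]
    · simp [hx]
  have h2 : (∫ x, ‖maxGrad u w g h x‖) + ∫ x, ‖minGrad u w g h x‖ ≤
      (∫ x, ‖g x‖) + ∫ x, ‖h x‖ := by
    rw [← integral_add hM.integrable_grad.norm hm.integrable_grad.norm,
      ← integral_add hug.integrable_grad.norm hwh.integrable_grad.norm]
    refine integral_mono (hM.integrable_grad.norm.add hm.integrable_grad.norm)
      (hug.integrable_grad.norm.add hwh.integrable_grad.norm) fun x => ?_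
    obtain ⟨h1, h2⟩ := abs_le.1 (abs_real_sign_le (u x - w x))
    have e1 := norm_add_le (((1 + Real.sign (u x - w x)) / 2) • g x)
      (((1 - Real.sign (u x - w x)) / 2) • h x)
    have e2 := norm_add_le (((1 - Real.sign (u x - w x)) / 2) • g x)
      (((1 + Real.sign (u x - w x)) / 2) • h x)
    rw [norm_smul, norm_smul, Real.norm_of_nonneg (by linarith),
      Real.norm_of_nonneg (by linarith)] at e1 e2
    simp only [maxGrad, minGrad]
    linarith
  unfold sobolevNorm
  linarith

/-- Weak gradient of the part of `u` above the level `c`. -/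
def aboveGrad (u : En n → ℝ) (g : En n → (En n →L[ℝ] ℝ)) (c : ℝ) (x : En n) : En n →L[ℝ] ℝ :=
  ((1 + Real.sign (u x - c)) / 2) • g x

/-- Weak gradient of the part of `u` below the level `c`. -/
def belowGrad (u : En n → ℝ) (g : En n → (En n →L[ℝ] ℝ)) (c : ℝ) (x : En n) : En n →L[ℝ] ℝ :=
  ((1 - Real.sign (u x - c)) / 2) • g x

theorem norm_aboveGrad (u : En n → ℝ) (g : En n → (En n →L[ℝ] ℝ)) (c : ℝ) (x : En n) :
    ‖aboveGrad u g c x‖ = (1 + Real.sign (u x - c)) / 2 * ‖g x‖ := by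
  obtain ⟨h1, h2⟩ := abs_le.1 (abs_real_sign_le (u x - c))
  rw [aboveGrad, norm_smul, Real.norm_of_nonneg (by linarith)]

theorem norm_belowGrad (u : En n → ℝ) (g : En n → (En n →L[ℝ] ℝ)) (c : ℝ) (x : En n) :
    ‖belowGrad u g c x‖ = (1 - Real.sign (u x - c)) / 2 * ‖g x‖ := by
  obtain ⟨h1, h2⟩ := abs_le.1 (abs_real_sign_le (u x - c))
  rw [belowGrad, norm_smul, Real.norm_of_nonneg (by linarith)]

theorem norm_aboveGrad_le (u : En n → ℝ) (g : En n → (En n →L[ℝ] ℝ)) (c : ℝ) (x : En n) :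
    ‖aboveGrad u g c x‖ ≤ ‖g x‖ := by
  obtain ⟨h1, h2⟩ := abs_le.1 (abs_real_sign_le (u x - c))
  rw [norm_aboveGrad]
  exact mul_le_of_le_one_left (norm_nonneg _) (by linarith)

theorem norm_belowGrad_le (u : En n → ℝ) (g : En n → (En n →L[ℝ] ℝ)) (c : ℝ) (x : En n) :
    ‖belowGrad u g c x‖ ≤ ‖g x‖ := by
  obtain ⟨h1, h2⟩ := abs_le.1 (abs_real_sign_le (u x - c))
  rw [norm_belowGrad]
  exact mul_le_of_le_one_left (norm_nonneg _) (by linarith)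

theorem IsSobolev.above (hug : IsSobolev u g) {c : ℝ} (hc : 0 ≤ c) :
    IsSobolev (fun x => Max.max (u x - c) 0) (aboveGrad u g c) := by
  have hl : LocallyIntegrable fun x => |u x - c| := by
    have h := hug.integrable.locallyIntegrable.sub (locallyIntegrable_const c)
    exact fun x => (h x).norm
  have hum := hug.integrable.aestronglyMeasurable
  have hsm := hug.sign_smul (hum.sub (aestronglyMeasurable_const (b := c)))
  have hlc : LocallyIntegrable fun x => u x + -c :=
    hug.integrable.locallyIntegrable.add (locallyIntegrable_const (-c))
  have hlg : LocallyIntegrable fun x => g x + (0 : En n →L[ℝ] ℝ) := by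
    simpa using hug.integrable_grad.locallyIntegrable
  have hW := (((hug.isWeakGrad.add (isWeakGrad_const (-c)) hug.integrable.locallyIntegrable
    (locallyIntegrable_const _) hug.integrable_grad.locallyIntegrable
    (locallyIntegrable_const 0)).add (hug.isWeakGrad_abs_sub c) hlc hl hlg
    hsm.locallyIntegrable)).const_mul (1 / 2)
  refine ⟨hug.integrable.mono ((hum.sub aestronglyMeasurable_const).sup
    aestronglyMeasurable_const) (ae_of_all _ fun x => ?_), ?_, hW.congr (fun x => ?_) fun x => ?_⟩
  · have := le_abs_self (u x)
    rw [Real.norm_of_nonneg (le_max_right _ _), Real.norm_eq_abs]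
    exact max_le (by linarith) (abs_nonneg _)
  · refine ((hug.integrable_grad.add hsm).smul (1 / 2 : ℝ)).congr (ae_of_all _ fun x => ?_)
    ext v
    simp only [aboveGrad, Pi.add_apply, Pi.smul_apply, add_apply, smul_apply, smul_eq_mul,
      Pi.sub_apply]
    ring
  · rcases le_total (u x) c with hx | hx
    · rw [max_eq_right (by linarith), abs_of_nonpos (by linarith)]; ring
    · rw [max_eq_left (by linarith), abs_of_nonneg (by linarith)]; ring
  · ext v
    simp only [aboveGrad, add_apply, smul_apply, smul_eq_mul, add_zero]
    ring

theorem IsSobolev.below (hug : IsSobolev u g) {c : ℝ} (hc : 0 ≤ c) :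
    IsSobolev (fun x => Min.min (u x) c) (belowGrad u g c) := by
  have hs := hug.sub (hug.above hc)
  have e1 : (fun x => Min.min (u x) c) = fun x => u x - Max.max (u x - c) 0 := by
    ext x
    rcases le_total (u x) c with hx | hx
    · simp [hx]
    · simp [hx]
  have e2 : belowGrad u g c = fun x => g x - aboveGrad u g c x := by
    ext x v
    simp only [aboveGrad, belowGrad, smul_apply, sub_apply, smul_eq_mul]; ring
  rwa [e1, e2]

theorem IsSobolev.sobolevNorm_eq_above_add_below (hug : IsSobolev u g) {c : ℝ} (hc : 0 ≤ c)
    (hu : ∀ x, 0 ≤ u x) :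
    sobolevNorm u g = sobolevNorm (fun x => Max.max (u x - c) 0) (aboveGrad u g c) +
      sobolevNorm (fun x => Min.min (u x) c) (belowGrad u g c) := by
  have hM := hug.above hc
  have hm := hug.below hc
  have h1 : ∫ x, |u x| = (∫ x, |Max.max (u x - c) 0|) + ∫ x, |Min.min (u x) c| := by
    rw [← integral_add hM.integrable.abs hm.integrable.abs]
    refine integral_congr_ae (ae_of_all _ fun x => ?_)
    have := hu x
    rcases le_total (u x) c with hx | hx
    · simp [hx]
    · simp [hx, abs_of_nonneg, hc, this]
  have h2 : ∫ x, ‖g x‖ = (∫ x, ‖aboveGrad u g c x‖) + ∫ x, ‖belowGrad u g c x‖ := by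
    rw [← integral_add hM.integrable_grad.norm hm.integrable_grad.norm]
    refine integral_congr_ae (ae_of_all _ fun x => ?_)
    simp only [norm_aboveGrad, norm_belowGrad]
    ring
  unfold sobolevNorm
  linarith

theorem IsSobolev.mul_contDiff {ζ : En n → ℝ} (hug : IsSobolev u g) (hζ : ContDiff ℝ 1 ζ)
    {C K : ℝ} (hC : ∀ x, |ζ x| ≤ C) (hK : ∀ x, ‖fderiv ℝ ζ x‖ ≤ K) :
    IsSobolev (fun x => u x * ζ x) (fun x => ζ x • g x + u x • fderiv ℝ ζ x) := by
  refine ⟨?_, ?_, hug.isWeakGrad.mul_contDiff hug.integrable.locallyIntegrable hζ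
    hug.integrable_grad.locallyIntegrable⟩
  · exact hug.integrable.mul_bdd (c := C) hζ.continuous.aestronglyMeasurable (ae_of_all _ hC)
  · exact (hug.integrable_grad.bdd_smul C hζ.continuous.aestronglyMeasurable
      (ae_of_all _ hC)).add (hug.integrable.smul_bdd K
        (hζ.continuous_fderiv one_ne_zero).aestronglyMeasurable (ae_of_all _ hK))

end Lattice

section Series

variable {E : Type*} [NormedAddCommGroup E] {f : ℕ → En n → E}

theorem tsum_lintegral_enorm_ne_top (hf : ∀ i, Integrable (f i))
    (hs : Summable fun i => ∫ x, ‖f i x‖) : ∑' i, ∫⁻ x, ‖f i x‖ₑ ≠ ∞ := by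
  simp only [← fun i => ofReal_integral_norm_eq_lintegral_enorm (hf i)]
  exact hs.tsum_ofReal_ne_top

theorem ae_summable_norm_of_summable_integral_norm (hf : ∀ i, Integrable (f i))
    (hs : Summable fun i => ∫ x, ‖f i x‖) : ∀ᵐ x, Summable fun i => ‖f i x‖ := by
  refine summable_norm_of_tsum_eLpNorm_ne_top le_rfl (fun i => (hf i).aestronglyMeasurable) ?_
  simpa only [eLpNorm_one_eq_lintegral_enorm] using tsum_lintegral_enorm_ne_top hf hs

theorem integrable_tsum_of_summable_integral_norm [CompleteSpace E] (hf : ∀ i, Integrable (f i))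
    (hs : Summable fun i => ∫ x, ‖f i x‖) : Integrable fun x => ∑' i, f i x := by
  have hae := ae_summable_norm_of_summable_integral_norm hf hs
  have hm : AEStronglyMeasurable fun x => ∑' i, f i x := by
    refine aestronglyMeasurable_of_tendsto_ae (u := atTop)
      (f := fun N x => ∑ i ∈ Finset.range N, f i x) (fun N => ?_) ?_
    · exact (integrable_finsetSum _ fun i _ => hf i).aestronglyMeasurable
    · filter_upwards [hae] with x hx using hx.of_norm.hasSum.tendsto_sum_nat
  refine ⟨hm, ?_⟩
  calc ∫⁻ x, ‖∑' i, f i x‖ₑ ≤ ∫⁻ x, ∑' i, ‖f i x‖ₑ := lintegral_mono fun x => enorm_tsum_le_tsum_enorm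
    _ = ∑' i, ∫⁻ x, ‖f i x‖ₑ := lintegral_tsum fun i => (hf i).aestronglyMeasurable.enorm
    _ < ∞ := (tsum_lintegral_enorm_ne_top hf hs).lt_top

theorem integral_norm_tsum_le [CompleteSpace E] (hf : ∀ i, Integrable (f i))
    (hs : Summable fun i => ∫ x, ‖f i x‖) :
    ∫ x, ‖∑' i, f i x‖ ≤ ∑' i, ∫ x, ‖f i x‖ := by
  have hs' : Summable fun i => ∫ x, ‖‖f i x‖‖ := by simpa using hs
  rw [integral_tsum_of_summable_integral_norm (fun i => (hf i).norm) hs']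
  refine integral_mono_ae (integrable_tsum_of_summable_integral_norm hf hs).norm
    (integrable_tsum_of_summable_integral_norm (fun i => (hf i).norm) hs') ?_
  filter_upwards [ae_summable_norm_of_summable_integral_norm hf hs] with x hx
  exact norm_tsum_le_tsum_norm hx

end Series

section Normalization

variable {u : En n → ℝ} {g : En n → (En n →L[ℝ] ℝ)}

theorem clm_eq_sum_smul_proj (T : En n →L[ℝ] ℝ) :
    T = ∑ i, T (EuclideanSpace.single i 1) • (EuclideanSpace.proj i : En n →L[ℝ] ℝ) := by
  ext v
  have hv : v = ∑ i, v i • (EuclideanSpace.single i (1 : ℝ) : En n) := by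
    ext j
    simp [Pi.single_apply]
  conv_lhs => rw [hv]
  simp [mul_comm]

theorem aestronglyMeasurable_clm (h : ∀ v, AEStronglyMeasurable fun x => g x v) :
    AEStronglyMeasurable g := by
  have e : g = fun x => ∑ i, g x (EuclideanSpace.single i 1) •
      (EuclideanSpace.proj i : En n →L[ℝ] ℝ) := funext fun x => clm_eq_sum_smul_proj (g x)
  rw [e]
  exact Finset.aestronglyMeasurable_fun_sum _ fun i _ => (h _).smul_const _

/-- The directions in which a gradient field is measurable. -/
def measurableDirections (g : En n → (En n →L[ℝ] ℝ)) : Submodule ℝ (En n) where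
  carrier := {v | AEStronglyMeasurable fun x => g x v}
  add_mem' := fun {v w} hv hw => by
    change AEStronglyMeasurable fun x => g x (v + w)
    simp only [map_add]
    exact AEStronglyMeasurable.add hv hw
  zero_mem' := by simpa using aestronglyMeasurable_const
  smul_mem' := fun a v hv => by
    change AEStronglyMeasurable fun x => g x (a • v)
    simp only [map_smul]
    exact AEStronglyMeasurable.const_smul hv a

theorem exists_test_not_integrable {v : En n} (hv : v ∉ measurableDirections g) :
    ∃ φ : En n → ℝ, ContDiff ℝ 1 φ ∧ HasCompactSupport φ ∧
      ¬ Integrable fun x => φ x * g x v := by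
  by_contra! hcon
  refine hv ?_
  let b : ℕ → ContDiffBump (0 : En n) := fun k =>
    ⟨k + 1, k + 2, by positivity, by linarith⟩
  refine aestronglyMeasurable_of_tendsto_ae (u := atTop) (f := fun k x => b k x * g x v)
    (fun k => (hcon _ (b k).contDiff (b k).hasCompactSupport).aestronglyMeasurable)
    (ae_of_all _ fun x => ?_)
  refine tendsto_const_nhds.congr' ?_
  obtain ⟨N, hN⟩ := exists_nat_ge ‖x‖
  filter_upwards [eventually_ge_atTop N] with k hk
  rw [(b k).one_of_mem_closedBall, one_mul]
  rw [mem_closedBall_zero_iff]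
  have : (N : ℝ) ≤ k := by exact_mod_cast hk
  change ‖x‖ ≤ (k : ℝ) + 1
  linarith

theorem IsWeakGrad.integral_mul_fderiv_eq_zero (hug : IsWeakGrad u g) (hu : Integrable u)
    {v : En n} (hv : v ∉ measurableDirections g) {φ : En n → ℝ} (hφ : ContDiff ℝ 1 φ)
    (hc : HasCompactSupport φ) : ∫ x, u x * fderiv ℝ φ x v = 0 := by
  by_cases hi : Integrable fun x => φ x * g x v
  · obtain ⟨ψ, hψ, hψc, hψi⟩ := exists_test_not_integrable hv
    have h1 : ∫ x, u x * fderiv ℝ ψ x v = 0 := by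
      rw [hug ψ hψ hψc v, integral_undef hψi, neg_zero]
    have h2 : ∫ x, u x * fderiv ℝ (fun x => φ x + ψ x) x v = 0 := by
      rw [hug _ (hφ.add hψ) (hc.add hψc) v, integral_undef, neg_zero]
      intro hsum
      refine hψi ((hsum.sub hi).congr (ae_of_all _ fun x => ?_))
      simp only [Pi.sub_apply]; ring
    have e : ∀ x, u x * fderiv ℝ (fun x => φ x + ψ x) x v =
        u x * fderiv ℝ φ x v + u x * fderiv ℝ ψ x v := fun x => by
      rw [fderiv_fun_add (hφ.differentiable one_ne_zero x) (hψ.differentiable one_ne_zero x),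
        add_apply, mul_add]
    simp only [e] at h2
    rw [integral_add (integrable_mul_fderiv_test hu.locallyIntegrable hφ hc v)
      (integrable_mul_fderiv_test hu.locallyIntegrable hψ hψc v), h1, add_zero] at h2
    exact h2
  · rw [hug φ hφ hc v, integral_undef hi, neg_zero]

/-- A weak gradient of integrable norm can be replaced by an integrable one. -/
theorem IsWeakGrad.exists_isSobolev (hug : IsWeakGrad u g) (hu : Integrable u)
    (hg : Integrable fun x => ‖g x‖) :
    ∃ g' : En n → (En n →L[ℝ] ℝ), IsSobolev u g' ∧ ∀ x, ‖g' x‖ ≤ ‖g x‖ := by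
  set L := measurableDirections g
  have hle : ∀ x, ‖(g x).comp L.starProjection‖ ≤ ‖g x‖ := fun x =>
    ((g x).opNorm_comp_le _).trans
      (mul_le_of_le_one_right (norm_nonneg _) L.starProjection_norm_le)
  have hmem : ∀ v, L.starProjection v ∈ L := fun v => L.starProjection_apply_mem v
  have hm : AEStronglyMeasurable fun x => (g x).comp L.starProjection :=
    aestronglyMeasurable_clm fun v => hmem v
  refine ⟨fun x => (g x).comp L.starProjection, ⟨hu, ?_, fun φ hφ hc v => ?_⟩, hle⟩
  · exact Integrable.mono' (f := fun x => (g x).comp L.starProjection) hg hm (ae_of_all _ hle)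
  · have h0 : ∫ x, u x * fderiv ℝ φ x (v - L.starProjection v) = 0 := by
      by_cases hv : v - L.starProjection v ∈ L
      · have : v - L.starProjection v = 0 :=
          L.inner_right_of_mem_orthogonal hv (L.sub_starProjection_mem_orthogonal v) |>
            inner_self_eq_zero.1
        simp [this]
      · exact hug.integral_mul_fderiv_eq_zero hu hv hφ hc
    have e : ∀ x, u x * fderiv ℝ φ x v = u x * fderiv ℝ φ x (L.starProjection v) +
        u x * fderiv ℝ φ x (v - L.starProjection v) := fun x => by
      rw [← mul_add, ← map_add, add_sub_cancel]
    simp only [e]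
    rw [integral_add (integrable_mul_fderiv_test hu.locallyIntegrable hφ hc _)
      (integrable_mul_fderiv_test hu.locallyIntegrable hφ hc _), h0, add_zero,
      hug φ hφ hc]
    rfl

end Normalization

section Capacity

variable {A B : Set (En n)} {u w : En n → ℝ} {g h : En n → (En n →L[ℝ] ℝ)}

/-- `u` is a normalized test function for the capacity of `A`. -/
structure IsCapTest (A : Set (En n)) (u : En n → ℝ) (g : En n → (En n →L[ℝ] ℝ)) : Prop
    extends IsSobolev u g where
  nonneg : ∀ x, 0 ≤ u x
  le_one : ∀ x, u x ≤ 1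
  eq_one : ∃ V, IsOpen V ∧ A ⊆ V ∧ ∀ x ∈ V, u x = 1

theorem IsSobolev.cap1_le (hug : IsSobolev u g) {V : Set (En n)} (hV : IsOpen V) (hA : A ⊆ V)
    (h1 : ∀ᵐ x, x ∈ V → 1 ≤ u x) : cap1 A ≤ ENNReal.ofReal (sobolevNorm u g) := by
  classical
  set w : En n → ℝ := fun x => if x ∈ V then Max.max (u x) 1 else u x with hw
  have huw : u =ᵐ[volume] w := by
    filter_upwards [h1] with x hx
    by_cases hxV : x ∈ V
    · simp [hw, hxV, hx hxV]
    · simp [hw, hxV]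
  have hwg := hug.congr_ae huw
  refine sInf_le ⟨w, g, hwg.integrable, hwg.integrable_grad.norm, hwg.isWeakGrad,
    ⟨V, hV, hA, fun x hx => by simp [hw, hx]⟩, ?_⟩
  have e : ∫ x, |u x| = ∫ x, |w x| := integral_congr_ae (huw.fun_comp abs)
  rw [sobolevNorm, e]

theorem IsCapTest.cap1_le (hug : IsCapTest A u g) : cap1 A ≤ ENNReal.ofReal (sobolevNorm u g) := by
  obtain ⟨V, hV, hA, h1⟩ := hug.eq_one
  exact hug.toIsSobolev.cap1_le hV hA (ae_of_all _ fun x hx => (h1 x hx).ge)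

theorem exists_isCapTest_of_cap1_lt {c : ℝ≥0∞} (hc : cap1 A < c) :
    ∃ u g, IsCapTest A u g ∧ ENNReal.ofReal (sobolevNorm u g) < c := by
  obtain ⟨_, ⟨u, g₀, hu, hg₀, hug₀, ⟨V, hV, hA, h1⟩, rfl⟩, hlt⟩ := sInf_lt_iff.1 hc
  obtain ⟨g, hug, hle⟩ := hug₀.exists_isSobolev hu hg₀
  have hp := hug.above le_rfl
  have hq := hp.below zero_le_one
  refine ⟨_, _, ⟨hq, fun x => by simp, fun x => min_le_right _ _, V, hV, hA, fun x hx => ?_⟩, ?_⟩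
  · have := h1 x hx
    simp only [sub_zero]
    rw [max_eq_left (by linarith), min_eq_right this]
  · refine (ENNReal.ofReal_le_ofReal ?_).trans_lt hlt
    refine (hp.sobolevNorm_mono (fun x => ?_) (norm_belowGrad_le _ _ _)).trans
      ((hug.sobolevNorm_mono (fun x => ?_) (norm_aboveGrad_le _ _ _)).trans ?_)
    · rw [abs_of_nonneg (by simp), abs_of_nonneg (by simp)]
      exact min_le_left _ _
    · rw [abs_of_nonneg (by simp), sub_zero]
      exact max_le (le_abs_self _) (abs_nonneg _)
    · exact add_le_add_right (integral_mono hug.integrable_grad.norm hg₀ hle) _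

theorem integral_abs_le_sobolevNorm (u : En n → ℝ) (g : En n → (En n →L[ℝ] ℝ)) :
    ∫ x, |u x| ≤ sobolevNorm u g :=
  le_add_of_nonneg_right (integral_nonneg fun _ => norm_nonneg _)

theorem integral_norm_grad_le_sobolevNorm (u : En n → ℝ) (g : En n → (En n →L[ℝ] ℝ)) :
    ∫ x, ‖g x‖ ≤ sobolevNorm u g :=
  le_add_of_nonneg_left (integral_nonneg fun _ => abs_nonneg _)

theorem IsCapTest.mono (hug : IsCapTest A u g) (hBA : B ⊆ A) : IsCapTest B u g := by
  obtain ⟨V, hV, hA, h1⟩ := hug.eq_one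
  exact ⟨hug.toIsSobolev, hug.nonneg, hug.le_one, V, hV, hBA.trans hA, h1⟩

theorem IsCapTest.max (hug : IsCapTest A u g) (hwh : IsCapTest B w h) :
    IsCapTest (A ∪ B) (fun x => max (u x) (w x)) (maxGrad u w g h) := by
  obtain ⟨V, hV, hA, h1⟩ := hug.eq_one
  obtain ⟨W, hW, hB, h2⟩ := hwh.eq_one
  refine ⟨hug.toIsSobolev.max hwh.toIsSobolev, fun x => le_max_of_le_left (hug.nonneg x),
    fun x => max_le (hug.le_one x) (hwh.le_one x), V ∪ W, hV.union hW,
    union_subset_union hA hB, fun x hx => ?_⟩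
  rcases hx with hx | hx
  · simpa [h1 x hx] using hwh.le_one x
  · simpa [h2 x hx] using hug.le_one x

theorem IsCapTest.min (hug : IsCapTest A u g) (hwh : IsCapTest B w h) :
    IsCapTest (A ∩ B) (fun x => min (u x) (w x)) (minGrad u w g h) := by
  obtain ⟨V, hV, hA, h1⟩ := hug.eq_one
  obtain ⟨W, hW, hB, h2⟩ := hwh.eq_one
  refine ⟨hug.toIsSobolev.min hwh.toIsSobolev, fun x => le_min (hug.nonneg x) (hwh.nonneg x),
    fun x => min_le_of_left_le (hug.le_one x), V ∩ W, hV.inter hW,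
    inter_subset_inter hA hB, fun x hx => ?_⟩
  simp [h1 x hx.1, h2 x hx.2]

theorem cap1_mono (hAB : A ⊆ B) : cap1 A ≤ cap1 B := by
  refine sInf_le_sInf ?_
  rintro c ⟨u, g, hu, hg, hug, ⟨V, hV, hB, h1⟩, rfl⟩
  exact ⟨u, g, hu, hg, hug, ⟨V, hV, hAB.trans hB, h1⟩, rfl⟩

theorem isSobolev_tsum {u : ℕ → En n → ℝ} {g : ℕ → En n → (En n →L[ℝ] ℝ)}
    (hug : ∀ i, IsSobolev (u i) (g i)) (hsu : Summable fun i => ∫ x, ‖u i x‖)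
    (hsg : Summable fun i => ∫ x, ‖g i x‖) :
    IsSobolev (fun x => ∑' i, u i x) (fun x => ∑' i, g i x) := by
  have hui := fun i => (hug i).integrable
  have hgi := fun i => (hug i).integrable_grad
  have haeg := ae_summable_norm_of_summable_integral_norm hgi hsg
  refine ⟨integrable_tsum_of_summable_integral_norm hui hsu,
    integrable_tsum_of_summable_integral_norm hgi hsg, fun φ hφ hc v => ?_⟩
  obtain ⟨C, hC0, hC1, hC2⟩ := exists_bound_of_test hφ hc v
  have h1 : ∫ x, (∑' i, u i x) * fderiv ℝ φ x v = ∑' i, ∫ x, u i x * fderiv ℝ φ x v := by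
    simp only [← tsum_mul_right]
    refine (integral_tsum_of_summable_integral_norm (fun i =>
      integrable_mul_fderiv_test (hui i).locallyIntegrable hφ hc v) ?_).symm
    refine (hsu.mul_right C).of_nonneg_of_le
      (fun i => integral_nonneg fun x => norm_nonneg _) fun i => ?_
    rw [← integral_mul_const]
    refine integral_mono_of_nonneg (ae_of_all _ fun x => norm_nonneg _)
      ((hui i).norm.mul_const C) (ae_of_all _ fun x => ?_)
    simpa using mul_le_mul_of_nonneg_left (hC2 x) (abs_nonneg (u i x))
  have h2 : ∫ x, φ x * (∑' i, g i x) v = ∑' i, ∫ x, φ x * g i x v := by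
    rw [integral_tsum_of_summable_integral_norm (fun i =>
      integrable_test_mul (hgi i).locallyIntegrable hφ hc v)]
    · refine integral_congr_ae ?_
      filter_upwards [haeg] with x hx
      have := (ContinuousLinearMap.apply ℝ ℝ v).map_tsum hx.of_norm
      simp only [ContinuousLinearMap.apply_apply] at this
      rw [this, tsum_mul_left]
    · refine (hsg.mul_right (C * ‖v‖)).of_nonneg_of_le
        (fun i => integral_nonneg fun x => norm_nonneg _) fun i => ?_
      rw [← integral_mul_const]
      refine integral_mono_of_nonneg (ae_of_all _ fun x => norm_nonneg _)
        ((hgi i).norm.mul_const _) (ae_of_all _ fun x => ?_)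
      simp only [norm_mul]
      calc ‖φ x‖ * ‖g i x v‖ ≤ C * (‖g i x‖ * ‖v‖) :=
            mul_le_mul (hC1 x) ((g i x).le_opNorm v) (norm_nonneg _) hC0
        _ = ‖g i x‖ * (C * ‖v‖) := by ring
  rw [h1, h2, ← tsum_neg]
  exact tsum_congr fun i => (hug i).isWeakGrad φ hφ hc v

/-- Countable subadditivity of the capacity. -/
theorem cap1_iUnion_le (A : ℕ → Set (En n)) : cap1 (⋃ i, A i) ≤ ∑' i, cap1 (A i) := by
  by_cases htop : ∑' i, cap1 (A i) = ∞
  · simp [htop]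
  refine ENNReal.le_of_forall_pos_le_add fun ε hε _ => ?_
  obtain ⟨e, he0, hes⟩ := ENNReal.exists_pos_sum_of_countable
    (ENNReal.coe_ne_zero.2 hε.ne') ℕ
  have hlt : ∀ i, cap1 (A i) < cap1 (A i) + e i := fun i =>
    ENNReal.lt_add_right (ENNReal.ne_top_of_tsum_ne_top htop i)
      (ENNReal.coe_ne_zero.2 (he0 i).ne')
  choose u g hug hn using fun i => exists_isCapTest_of_cap1_lt (hlt i)
  have hle : ∑' i, ENNReal.ofReal (sobolevNorm (u i) (g i)) ≤ ∑' i, cap1 (A i) + ε :=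
    calc _ ≤ ∑' i, (cap1 (A i) + e i) := ENNReal.tsum_le_tsum fun i => (hn i).le
      _ = ∑' i, cap1 (A i) + ∑' i, (e i : ℝ≥0∞) := ENNReal.tsum_add
      _ ≤ _ := by gcongr
  have hs : Summable fun i => sobolevNorm (u i) (g i) := by
    have h := ENNReal.summable_toReal
      (ne_top_of_le_ne_top (ENNReal.add_ne_top.2 ⟨htop, ENNReal.coe_ne_top⟩) hle)
    simpa only [ENNReal.toReal_ofReal (sobolevNorm_nonneg _ _)] using h
  have hsu : Summable fun i => ∫ x, ‖u i x‖ := Summable.of_nonneg_of_le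
    (fun i => integral_nonneg fun x => norm_nonneg _)
    (fun i => integral_abs_le_sobolevNorm (u i) (g i)) hs
  have hsg : Summable fun i => ∫ x, ‖g i x‖ := Summable.of_nonneg_of_le
    (fun i => integral_nonneg fun x => norm_nonneg _)
    (fun i => integral_norm_grad_le_sobolevNorm (u i) (g i)) hs
  have hui := fun i => (hug i).integrable
  have hgi := fun i => (hug i).integrable_grad
  have haeu := ae_summable_norm_of_summable_integral_norm hui hsu
  have hS := isSobolev_tsum (fun i => (hug i).toIsSobolev) hsu hsg
  choose V hV hAV hV1 using fun i => (hug i).eq_one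
  refine le_trans ?_ hle
  rw [← ENNReal.ofReal_tsum_of_nonneg (fun i => sobolevNorm_nonneg _ _) hs]
  refine (hS.cap1_le (isOpen_iUnion hV) (iUnion_mono hAV) ?_).trans (ENNReal.ofReal_le_ofReal ?_)
  · filter_upwards [haeu] with x hx hxV
    obtain ⟨i, hi⟩ := mem_iUnion.1 hxV
    rw [← hV1 i x hi]
    exact hx.of_norm.le_tsum i fun j _ => (hug j).nonneg x
  · have e : ∑' i, sobolevNorm (u i) (g i) = (∑' i, ∫ x, ‖u i x‖) + ∑' i, ∫ x, ‖g i x‖ :=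
      hsu.tsum_add hsg
    rw [e]
    exact add_le_add (integral_norm_tsum_le hui hsu) (integral_norm_tsum_le hgi hsg)

theorem cap1_union_le (A B : Set (En n)) : cap1 (A ∪ B) ≤ cap1 A + cap1 B := by
  refine ENNReal.le_of_forall_pos_le_add fun ε hε hlt => ?_
  have hε2 : ((ε / 2 : NNReal) : ℝ≥0∞) ≠ 0 := by simpa using hε.ne'
  obtain ⟨u, g, hug, hn⟩ := exists_isCapTest_of_cap1_lt
    (ENNReal.lt_add_right (ENNReal.add_lt_top.1 hlt).1.ne hε2)
  obtain ⟨w, h, hwh, hm⟩ := exists_isCapTest_of_cap1_lt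
    (ENNReal.lt_add_right (ENNReal.add_lt_top.1 hlt).2.ne hε2)
  have key := sobolevNorm_max_add_min_le hug.toIsSobolev hwh.toIsSobolev
  have h0 := sobolevNorm_nonneg (fun x => Min.min (u x) (w x)) (minGrad u w g h)
  calc cap1 (A ∪ B) ≤ ENNReal.ofReal (sobolevNorm u g + sobolevNorm w h) :=
        (hug.max hwh).cap1_le.trans (ENNReal.ofReal_le_ofReal (by linarith))
    _ = ENNReal.ofReal (sobolevNorm u g) + ENNReal.ofReal (sobolevNorm w h) :=
        ENNReal.ofReal_add (sobolevNorm_nonneg _ _) (sobolevNorm_nonneg _ _)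
    _ ≤ (cap1 A + (ε / 2 : NNReal)) + (cap1 B + (ε / 2 : NNReal)) := add_le_add hn.le hm.le
    _ = cap1 A + cap1 B + ε := by
        rw [add_add_add_comm, ← ENNReal.coe_add, add_halves]

end Capacity

section MonotoneTests

/-- Successive maxima of a sequence of functions with weak gradients. -/
def succMax (u : ℕ → En n → ℝ) (g : ℕ → En n → (En n →L[ℝ] ℝ)) :
    ℕ → (En n → ℝ) × (En n → (En n →L[ℝ] ℝ))
  | 0 => (u 0, g 0)
  | k + 1 => (fun x => max ((succMax u g k).1 x) (u (k + 1) x),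
      maxGrad (succMax u g k).1 (u (k + 1)) (succMax u g k).2 (g (k + 1)))

theorem IsCapTest.toReal_cap1_le {A : Set (En n)} {u : En n → ℝ} {g : En n → (En n →L[ℝ] ℝ)}
    (hug : IsCapTest A u g) : (cap1 A).toReal ≤ sobolevNorm u g := by
  rw [← ENNReal.toReal_ofReal (sobolevNorm_nonneg u g)]
  exact ENNReal.toReal_mono ENNReal.ofReal_ne_top hug.cap1_le

theorem exists_isCapTest_sobolevNorm_le {A : Set (En n)} (hA : cap1 A ≠ ∞) {ε : ℝ} (hε : 0 < ε) :
    ∃ u g, IsCapTest A u g ∧ sobolevNorm u g ≤ (cap1 A).toReal + ε := by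
  obtain ⟨u, g, hug, hlt⟩ := exists_isCapTest_of_cap1_lt
    (ENNReal.lt_add_right hA (ENNReal.ofReal_pos.2 hε).ne')
  refine ⟨u, g, hug, ?_⟩
  have := ENNReal.toReal_mono (ENNReal.add_ne_top.2 ⟨hA, ENNReal.ofReal_ne_top⟩) hlt.le
  rwa [ENNReal.toReal_ofReal (sobolevNorm_nonneg _ _), ENNReal.toReal_add hA ENNReal.ofReal_ne_top,
    ENNReal.toReal_ofReal hε.le] at this

/-- Nearly optimal test functions for an increasing sequence of sets can be chosen increasing. -/
theorem exists_monotone_isCapTest {A : ℕ → Set (En n)} (hA : Monotone A) {M : ℝ} (hM0 : 0 ≤ M)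
    (hM : ∀ k, cap1 (A k) ≤ ENNReal.ofReal M) {η : ℝ} (hη : 0 < η) :
    ∃ (v : ℕ → En n → ℝ) (g : ℕ → En n → (En n →L[ℝ] ℝ)), Monotone v ∧
      (∀ j, IsCapTest (A j) (v j) (g j)) ∧ ∀ j, sobolevNorm (v j) (g j) ≤ M + η := by
  have htop : ∀ k, cap1 (A k) ≠ ∞ := fun k => ne_top_of_le_ne_top ENNReal.ofReal_ne_top (hM k)
  have hMr : ∀ k, (cap1 (A k)).toReal ≤ M := fun k => by
    simpa [ENNReal.toReal_ofReal hM0] using ENNReal.toReal_mono ENNReal.ofReal_ne_top (hM k)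
  choose u g hug hn using fun k : ℕ => exists_isCapTest_sobolevNorm_le (htop k)
    (show 0 < η * (1 / 2) ^ (k + 1) by positivity)
  have htest : ∀ k, IsCapTest (A k) (succMax u g k).1 (succMax u g k).2 := fun k => by
    induction k with
    | zero => exact hug 0
    | succ k ih => exact (ih.max (hug (k + 1))).mono subset_union_right
  have hnorm : ∀ k, sobolevNorm (succMax u g k).1 (succMax u g k).2 ≤
      (cap1 (A k)).toReal + η * (1 - (1 / 2) ^ (k + 1)) := fun k => by
    induction k with
    | zero => refine (hn 0).trans (le_of_eq ?_); norm_num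
    | succ k ih =>
      have h1 := sobolevNorm_max_add_min_le (htest k).toIsSobolev (hug (k + 1)).toIsSobolev
      have h2 := ((htest k).min (hug (k + 1))).toReal_cap1_le
      rw [inter_eq_self_of_subset_left (hA k.le_succ)] at h2
      have h3 := hn (k + 1)
      have h4 : (1 / 2 : ℝ) ^ (k + 1) = 2 * (1 / 2) ^ (k + 1 + 1) := by ring
      rw [h4] at ih
      simp only [succMax]
      linarith
  refine ⟨fun k => (succMax u g k).1, fun k => (succMax u g k).2,
    monotone_nat_of_le_succ fun k x => le_max_left _ _, htest, fun k => (hnorm k).trans ?_⟩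
  have h1 := hMr k
  have h2 : 0 ≤ η * (1 / 2) ^ (k + 1) := by positivity
  linarith

end MonotoneTests

section Poincare

variable {u : En n → ℝ} {g : En n → (En n →L[ℝ] ℝ)} {T T' : Set (En n)}

theorem enorm_sub_le_lintegral_fderiv (hu : ContDiff ℝ 1 u) (x y : En n) :
    ‖u x - u (x - y)‖ₑ ≤ ∫⁻ s in Ioc (0 : ℝ) 1, ‖fderiv ℝ u (x - s • y)‖ₑ * ‖y‖ₑ := by
  have hd : ∀ s : ℝ, HasDerivAt (fun s : ℝ => -u (x - s • y)) (fderiv ℝ u (x - s • y) y) s := by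
    intro s
    have h1 : HasDerivAt (fun s : ℝ => x - s • y) (-y) s := by
      simpa using ((hasDerivAt_id s).smul_const y).const_sub x
    have h2 := ((hu.differentiable one_ne_zero (x - s • y)).hasFDerivAt.comp_hasDerivAt s h1).neg
    simpa using! h2
  have hcont : Continuous fun s : ℝ => fderiv ℝ u (x - s • y) y :=
    (continuous_fderiv_apply_of_contDiff hu y).comp (by fun_prop)
  have hftc := intervalIntegral.integral_eq_sub_of_hasDerivAt (a := 0) (b := 1)
    (fun s _ => hd s) (hcont.intervalIntegrable _ _)
  have e : u x - u (x - y) = ∫ s in Ioc (0 : ℝ) 1, fderiv ℝ u (x - s • y) y := by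
    rw [← intervalIntegral.integral_of_le zero_le_one, hftc]
    simp only [one_smul, zero_smul, sub_zero]; ring
  rw [e]
  refine (enorm_integral_le_lintegral_enorm _).trans (lintegral_mono fun s => ?_)
  exact ContinuousLinearMap.le_opENorm _ _

theorem lintegral_translate_le {F : En n → ℝ≥0∞} (hT : MeasurableSet T) (hT' : MeasurableSet T')
    (z : En n) (h : ∀ x ∈ T, x - z ∈ T') : ∫⁻ x in T, F (x - z) ≤ ∫⁻ x in T', F x := by
  rw [← lintegral_indicator hT, ← lintegral_indicator hT',
    ← lintegral_sub_right_eq_self (T'.indicator F) z]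
  refine lintegral_mono fun x => ?_
  by_cases hx : x ∈ T
  · simp [hx, h x hx]
  · simp [hx]

theorem lintegral_enorm_sub_translate_le_of_contDiff (hu : ContDiff ℝ 1 u) (hT : MeasurableSet T)
    (hT' : MeasurableSet T') (y : En n) (h : ∀ x ∈ T, ∀ s ∈ Icc (0 : ℝ) 1, x - s • y ∈ T') :
    ∫⁻ x in T, ‖u x - u (x - y)‖ₑ ≤ ‖y‖ₑ * ∫⁻ x in T', ‖fderiv ℝ u x‖ₑ := by
  have hc : Continuous (fderiv ℝ u) := hu.continuous_fderiv one_ne_zero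
  calc ∫⁻ x in T, ‖u x - u (x - y)‖ₑ
      ≤ ∫⁻ x in T, ∫⁻ s in Ioc (0 : ℝ) 1, ‖fderiv ℝ u (x - s • y)‖ₑ * ‖y‖ₑ :=
        lintegral_mono fun x => enorm_sub_le_lintegral_fderiv hu x y
    _ = ∫⁻ s in Ioc (0 : ℝ) 1, ∫⁻ x in T, ‖fderiv ℝ u (x - s • y)‖ₑ * ‖y‖ₑ := by
        refine lintegral_lintegral_swap (Measurable.aemeasurable ?_)
        have : Continuous fun p : En n × ℝ => ‖fderiv ℝ u (p.1 - p.2 • y)‖ₑ :=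
          (hc.comp (by fun_prop)).enorm
        exact this.measurable.mul_const _
    _ ≤ ∫⁻ s in Ioc (0 : ℝ) 1, ‖y‖ₑ * ∫⁻ x in T', ‖fderiv ℝ u x‖ₑ := by
        refine setLIntegral_mono measurable_const fun s hs => ?_
        rw [lintegral_mul_const' _ _ enorm_ne_top, mul_comm]
        refine mul_le_mul' le_rfl ?_
        exact lintegral_translate_le (F := fun x => ‖fderiv ℝ u x‖ₑ) hT hT' (s • y)
          fun x hx => h x hx s ⟨hs.1.le, hs.2⟩
    _ = ‖y‖ₑ * ∫⁻ x in T', ‖fderiv ℝ u x‖ₑ := by simp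

theorem IsSobolev.lintegral_enorm_sub_translate_le (hug : IsSobolev u g) (hT : MeasurableSet T)
    (hT' : MeasurableSet T') (y : En n) (h : ∀ x ∈ T, ∀ s ∈ Icc (0 : ℝ) 1, x - s • y ∈ T') :
    ∫⁻ x in T, ‖u x - u (x - y)‖ₑ ≤ ‖y‖ₑ * ∫⁻ x in T', ‖g x‖ₑ := by
  set U : ℕ → En n → ℝ := fun i => mollify (bumpSeq i) u with hU
  have hUc : ∀ i, ContDiff ℝ 1 (U i) := fun i => contDiff_mollify _ hug.integrable
  have hae := tendsto_mollify_bumpSeq_ae hug.integrable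
  have hae' : ∀ᵐ x, Tendsto (fun i => U i (x - y)) atTop (𝓝 (u (x - y))) :=
    (measurePreserving_sub_right volume y).quasiMeasurePreserving.ae hae
  set D : ℕ → ℝ≥0∞ := fun i => ∫⁻ x, ‖mollify (bumpSeq i) g x - g x‖ₑ with hD
  have hD0 : Tendsto D atTop (𝓝 0) := by
    have h1 := ENNReal.tendsto_ofReal (tendsto_integral_mollify_bumpSeq_sub hug.integrable_grad)
    rw [ENNReal.ofReal_zero] at h1
    refine h1.congr fun i => ?_
    exact ofReal_integral_norm_eq_lintegral_enorm
      ((integrable_mollify _ hug.integrable_grad).sub hug.integrable_grad)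
  have hbound : ∀ i, ∫⁻ x in T, ‖U i x - U i (x - y)‖ₑ ≤
      ‖y‖ₑ * ((∫⁻ x in T', ‖g x‖ₑ) + D i) := fun i => by
    refine (lintegral_enorm_sub_translate_le_of_contDiff (hUc i) hT hT' y h).trans ?_
    gcongr
    calc ∫⁻ x in T', ‖fderiv ℝ (U i) x‖ₑ
        ≤ ∫⁻ x in T', (‖g x‖ₑ + ‖mollify (bumpSeq i) g x - g x‖ₑ) := by
          refine lintegral_mono fun x => ?_
          rw [hU, hug.fderiv_mollify]
          calc ‖mollify (bumpSeq i) g x‖ₑ = ‖g x + (mollify (bumpSeq i) g x - g x)‖ₑ := by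
                rw [add_sub_cancel]
            _ ≤ _ := by
                simp only [← ofReal_norm]
                rw [← ENNReal.ofReal_add (norm_nonneg _) (norm_nonneg _)]
                exact ENNReal.ofReal_le_ofReal (norm_add_le _ _)
      _ = (∫⁻ x in T', ‖g x‖ₑ) + ∫⁻ x in T', ‖mollify (bumpSeq i) g x - g x‖ₑ :=
          lintegral_add_left' hug.integrable_grad.aestronglyMeasurable.enorm.restrict _
      _ ≤ _ := by
          gcongr
          exact setLIntegral_le_lintegral _ _
  have hlim : Tendsto (fun i => ‖y‖ₑ * ((∫⁻ x in T', ‖g x‖ₑ) + D i)) atTop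
      (𝓝 (‖y‖ₑ * ((∫⁻ x in T', ‖g x‖ₑ) + 0))) :=
    ENNReal.Tendsto.const_mul (tendsto_const_nhds.add hD0) (Or.inr enorm_ne_top)
  calc ∫⁻ x in T, ‖u x - u (x - y)‖ₑ
      = ∫⁻ x in T, liminf (fun i => ‖U i x - U i (x - y)‖ₑ) atTop := by
        refine lintegral_congr_ae (ae_restrict_of_ae ?_)
        filter_upwards [hae, hae'] with x h1 h2
        exact (h1.sub h2).enorm.liminf_eq.symm
    _ ≤ liminf (fun i => ∫⁻ x in T, ‖U i x - U i (x - y)‖ₑ) atTop :=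
        lintegral_liminf_le fun i => ((hUc i).continuous.sub
          ((hUc i).continuous.comp (continuous_sub_right y))).enorm.measurable
    _ ≤ liminf (fun i => ‖y‖ₑ * ((∫⁻ x in T', ‖g x‖ₑ) + D i)) atTop :=
        liminf_le_liminf (Eventually.of_forall hbound)
    _ = ‖y‖ₑ * ∫⁻ x in T', ‖g x‖ₑ := by rw [hlim.liminf_eq, add_zero]

theorem enorm_sub_mollify_le (b : ContDiffBump (0 : En n)) (hu : Integrable u) (x : En n) :
    ‖u x - mollify b u x‖ₑ ≤
      ∫⁻ y, ENNReal.ofReal (b.normed volume y) * ‖u x - u (x - y)‖ₑ := by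
  have hi : Integrable fun y => b.normed volume y * u (x - y) := by
    have := (convolutionExistsAt_mollify b hu x).comp_sub_left x
    simpa using this
  have e : u x - mollify b u x = ∫ y, b.normed volume y * (u x - u (x - y)) := by
    simp only [mul_sub]
    rw [integral_sub (b.integrable_normed.mul_const _) hi, integral_mul_const, b.integral_normed,
      one_mul, mollify_apply]
    rfl
  rw [e]
  refine (enorm_integral_le_lintegral_enorm _).trans (lintegral_mono fun y => ?_)
  rw [enorm_mul, Real.enorm_of_nonneg (b.nonneg_normed y)]

theorem IsSobolev.lintegral_enorm_sub_mollify_le (hug : IsSobolev u g)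
    (b : ContDiffBump (0 : En n)) (hT : MeasurableSet T) (hT' : MeasurableSet T')
    (h : ∀ x ∈ T, ∀ y, dist y x < b.rOut → y ∈ T') :
    ∫⁻ x in T, ‖u x - mollify b u x‖ₑ ≤ ENNReal.ofReal b.rOut * ∫⁻ x in T', ‖g x‖ₑ := by
  have hum := hug.integrable.aestronglyMeasurable
  have hac : ((volume : Measure (En n)).restrict T).prod (volume : Measure (En n)) ≪
      (volume : Measure (En n)).prod volume :=
    Measure.restrict_le_self.absolutelyContinuous.prod Measure.AbsolutelyContinuous.rfl
  have hmeas : AEMeasurable (fun p : En n × En n =>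
      ENNReal.ofReal (b.normed volume p.2) * ‖u p.1 - u (p.1 - p.2)‖ₑ)
      ((volume.restrict T).prod volume) := by
    refine AEMeasurable.mono_ac ?_ hac
    refine AEMeasurable.mul
      (f := fun p : En n × En n => ENNReal.ofReal (b.normed volume p.2))
      (g := fun p : En n × En n => ‖u p.1 - u (p.1 - p.2)‖ₑ) ?_ ?_
    · exact (((b.continuous_normed (μ := volume)).comp continuous_snd).measurable.ennreal_ofReal).aemeasurable
    · exact (hum.comp_fst.sub (hum.comp_quasiMeasurePreserving
        (quasiMeasurePreserving_sub_of_right_invariant volume volume))).enorm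
  calc ∫⁻ x in T, ‖u x - mollify b u x‖ₑ
      ≤ ∫⁻ x in T, ∫⁻ y, ENNReal.ofReal (b.normed volume y) * ‖u x - u (x - y)‖ₑ :=
        lintegral_mono fun x => enorm_sub_mollify_le b hug.integrable x
    _ = ∫⁻ y, ∫⁻ x in T, ENNReal.ofReal (b.normed volume y) * ‖u x - u (x - y)‖ₑ :=
        lintegral_lintegral_swap hmeas
    _ ≤ ∫⁻ y, ENNReal.ofReal (b.normed volume y) *
          (ENNReal.ofReal b.rOut * ∫⁻ x in T', ‖g x‖ₑ) := by
        refine lintegral_mono fun y => ?_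
        rw [lintegral_const_mul' _ _ ENNReal.ofReal_ne_top]
        by_cases hy : y ∈ ball (0 : En n) b.rOut
        · rw [mem_ball_zero_iff] at hy
          gcongr
          refine (hug.lintegral_enorm_sub_translate_le hT hT' y fun x hx s hs => ?_).trans ?_
          · refine h x hx _ ?_
            rw [dist_eq_norm, sub_sub_cancel_left, norm_neg, norm_smul, Real.norm_of_nonneg hs.1]
            exact (mul_le_of_le_one_left (norm_nonneg _) hs.2).trans_lt hy
          · gcongr
            rw [← ofReal_norm]
            exact ENNReal.ofReal_le_ofReal hy.le
        · rw [← b.support_normed_eq (μ := volume), Function.notMem_support] at hy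
          simp [hy]
    _ = ENNReal.ofReal b.rOut * ∫⁻ x in T', ‖g x‖ₑ := by
        rw [lintegral_mul_const' _ _ (ENNReal.mul_ne_top ENNReal.ofReal_ne_top ?_),
          ← ofReal_integral_eq_lintegral_ofReal b.integrable_normed
            (ae_of_all _ b.nonneg_normed), b.integral_normed, ENNReal.ofReal_one, one_mul]
        exact ((setLIntegral_le_lintegral _ _).trans_lt hug.integrable_grad.2).ne

/-- A Poincaré type inequality for the distance to a mollification. -/
theorem IsSobolev.integral_abs_sub_mollify_le (hug : IsSobolev u g)
    (b : ContDiffBump (0 : En n)) (hT : MeasurableSet T) (hT' : MeasurableSet T')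
    (h : ∀ x ∈ T, ∀ y, dist y x < b.rOut → y ∈ T') :
    ∫ x in T, |u x - mollify b u x| ≤ b.rOut * ∫ x in T', ‖g x‖ := by
  have key := hug.lintegral_enorm_sub_mollify_le b hT hT' h
  have hi : Integrable (fun x => u x - mollify b u x) (volume.restrict T) :=
    (hug.integrable.sub (integrable_mollify b hug.integrable)).restrict
  have hg : Integrable g (volume.restrict T') := hug.integrable_grad.restrict
  rw [← ofReal_integral_norm_eq_lintegral_enorm hi, ← ofReal_integral_norm_eq_lintegral_enorm hg,
    ← ENNReal.ofReal_mul b.rOut_pos.le, ENNReal.ofReal_le_ofReal_iff] at key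
  · exact key
  · exact mul_nonneg b.rOut_pos.le (integral_nonneg fun _ => norm_nonneg _)

end Poincare

section Cutoff

theorem lipschitzWith_mollify (b : ContDiffBump (0 : En n)) {u : En n → ℝ} {K : NNReal}
    (hu : LipschitzWith K u) {C : ℝ} (hC : ∀ x, |u x| ≤ C) : LipschitzWith K (mollify b u) := by
  have hi : ∀ x, Integrable fun y => b.normed volume y * u (x - y) := fun x =>
    b.integrable_normed.mul_bdd (c := C)
      (hu.continuous.comp (continuous_sub_left x)).aestronglyMeasurable
      (ae_of_all _ fun y => hC (x - y))
  refine LipschitzWith.of_dist_le_mul fun x x' => ?_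
  rw [Real.dist_eq, mollify_apply, mollify_apply]
  simp only [smul_eq_mul]
  rw [← integral_sub (hi x) (hi x')]
  calc |∫ y, (b.normed volume y * u (x - y) - b.normed volume y * u (x' - y))|
      ≤ ∫ y, b.normed volume y * (K * dist x x') := by
        rw [← Real.norm_eq_abs]
        refine norm_integral_le_of_norm_le ((b.integrable_normed (μ := volume)).mul_const _)
          (ae_of_all _ fun y => ?_)
        rw [← mul_sub, norm_mul, Real.norm_of_nonneg (b.nonneg_normed y)]
        refine mul_le_mul_of_nonneg_left ?_ (b.nonneg_normed y)
        rw [← dist_eq_norm]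
        refine (hu.dist_le_mul _ _).trans ?_
        rw [dist_sub_right]
    _ = K * dist x x' := by rw [integral_mul_const, b.integral_normed, one_mul]

theorem mollify_le_one (b : ContDiffBump (0 : En n)) {u : En n → ℝ} (h0 : ∀ x, 0 ≤ u x)
    (h1 : ∀ x, u x ≤ 1) (x : En n) : mollify b u x ≤ 1 := by
  rw [mollify_apply, ← b.integral_normed (μ := volume)]
  refine integral_mono_of_nonneg (ae_of_all _ fun y => ?_) b.integrable_normed
    (ae_of_all _ fun y => ?_)
  · exact mul_nonneg (b.nonneg_normed y) (h0 _)
  · exact mul_le_of_le_one_right (b.nonneg_normed y) (h1 _)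

theorem mollify_eq_of_forall_mem_ball (b : ContDiffBump (0 : En n)) {u : En n → ℝ} {x : En n}
    (h : ∀ y ∈ ball x b.rOut, u y = u x) : mollify b u x = u x :=
  b.normed_convolution_eq_right h

/-- A smooth cutoff function at scale `τ`. -/
theorem exists_cutoff (S : Set (En n)) {τ : ℝ} (hτ : 0 < τ) :
    ∃ ζ : En n → ℝ, ContDiff ℝ 1 ζ ∧ (∀ x, 0 ≤ ζ x) ∧ (∀ x, ζ x ≤ 1) ∧ (∀ x ∈ S, ζ x = 1) ∧
      (∀ x, ζ x ≠ 0 → ∃ y ∈ S, dist x y < 5 * τ) ∧ ∀ x, ‖fderiv ℝ ζ x‖ ≤ τ⁻¹ := by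
  rcases S.eq_empty_or_nonempty with rfl | hS
  · exact ⟨fun _ => 0, contDiff_const, by simp, by simp, by simp, by simp, by simp [hτ.le]⟩
  let b : ContDiffBump (0 : En n) := ⟨τ, 2 * τ, hτ, by linarith⟩
  set u : En n → ℝ := fun x => max 0 (min 1 (3 - τ⁻¹ * infDist x S)) with hu
  have hl : LipschitzWith ⟨τ⁻¹, by positivity⟩ u := by
    refine LipschitzWith.of_dist_le_mul fun x y => ?_
    have h1 : |infDist x S - infDist y S| ≤ dist x y := by
      simpa [Real.dist_eq] using (lipschitz_infDist_pt S).dist_le_mul x y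
    rw [Real.dist_eq]
    calc |u x - u y| ≤ |(min 1 (3 - τ⁻¹ * infDist x S)) - min 1 (3 - τ⁻¹ * infDist y S)| := by
          refine (abs_max_sub_max_le_max _ _ _ _).trans ?_
          simp
      _ ≤ |(3 - τ⁻¹ * infDist x S) - (3 - τ⁻¹ * infDist y S)| := by
          refine (abs_min_sub_min_le_max _ _ _ _).trans ?_
          simp
      _ = τ⁻¹ * |infDist x S - infDist y S| := by
          have e : 3 - τ⁻¹ * infDist x S - (3 - τ⁻¹ * infDist y S) =
              τ⁻¹ * (infDist y S - infDist x S) := by ring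
          rw [e, abs_mul, abs_of_pos (inv_pos.2 hτ), abs_sub_comm]
      _ ≤ τ⁻¹ * dist x y := by gcongr
  have h0 : ∀ x, 0 ≤ u x := fun x => le_max_left _ _
  have h1 : ∀ x, u x ≤ 1 := fun x => max_le zero_le_one (min_le_left _ _)
  have hC : ∀ x, |u x| ≤ 1 := fun x => (abs_of_nonneg (h0 x)).trans_le (h1 x)
  refine ⟨mollify b u, ?_, mollify_nonneg b h0, mollify_le_one b h0 h1, ?_, ?_, fun x => ?_⟩
  · exact b.hasCompactSupport_normed.contDiff_convolution_left _ b.contDiff_normed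
      hl.continuous.locallyIntegrable
  · intro x hx
    have hball : ∀ y ∈ ball x (2 * τ), u y = 1 := fun y hy => by
      have h2 : infDist y S ≤ 2 * τ := (infDist_le_dist_of_mem hx).trans (mem_ball.1 hy).le
      have h3 : τ⁻¹ * infDist y S ≤ 2 := by
        rw [inv_mul_le_iff₀ hτ]; linarith
      rw [hu]
      simp only
      rw [min_eq_left (by linarith), max_eq_right zero_le_one]
    have hx1 := hball x (mem_ball_self (by positivity))
    rw [mollify_eq_of_forall_mem_ball b fun y hy => (hball y hy).trans hx1.symm, hx1]
  · intro x hx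
    by_contra! hcon
    refine hx ?_
    have h5 : 5 * τ ≤ infDist x S := (le_infDist hS).2 fun {y} hy => hcon y hy
    have hball : ∀ y ∈ ball x (2 * τ), u y = 0 := fun y hy => by
      have h2 : infDist x S ≤ infDist y S + dist x y := infDist_le_infDist_add_dist
      rw [mem_ball, dist_comm] at hy
      have h3 : 3 ≤ τ⁻¹ * infDist y S := by
        rw [le_inv_mul_iff₀ hτ]; linarith
      rw [hu]
      simp only
      exact max_eq_left ((min_le_right _ _).trans (by linarith))
    have hx1 := hball x (mem_ball_self (by positivity))
    rw [mollify_eq_of_forall_mem_ball b fun y hy => (hball y hy).trans hx1.symm, hx1]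
  · exact norm_fderiv_le_of_lipschitz ℝ (lipschitzWith_mollify b hl hC)

end Cutoff

section MonotoneLimit

variable {v : ℕ → En n → ℝ} {g : ℕ → En n → (En n →L[ℝ] ℝ)}

/-- A bounded monotone sequence in `L¹` converges in `L¹` to its pointwise supremum. -/
theorem exists_tendsto_of_monotone {B : ℕ → Set (En n)} (hv : Monotone v)
    (hvg : ∀ j, IsCapTest (B j) (v j) (g j)) {N : ℝ} (hN : ∀ j, sobolevNorm (v j) (g j) ≤ N) :
    ∃ w : En n → ℝ, Integrable w ∧ (∀ x, 0 ≤ w x) ∧ (∀ x, w x ≤ 1) ∧ (∀ j x, v j x ≤ w x) ∧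
      Tendsto (fun j => ∫ x, |w x - v j x|) atTop (𝓝 0) := by
  set w : En n → ℝ := fun x => ⨆ j, v j x with hw
  have hbdd : ∀ x, BddAbove (range fun j => v j x) := fun x =>
    ⟨1, by rintro _ ⟨j, rfl⟩; exact (hvg j).le_one x⟩
  have hle : ∀ j x, v j x ≤ w x := fun j x => le_ciSup (hbdd x) j
  have hw1 : ∀ x, w x ≤ 1 := fun x => ciSup_le fun j => (hvg j).le_one x
  have hw0 : ∀ x, 0 ≤ w x := fun x => ((hvg 0).nonneg x).trans (hle 0 x)
  have hlim : ∀ x, Tendsto (fun j => v j x) atTop (𝓝 (w x)) := fun x =>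
    tendsto_atTop_ciSup (fun i j hij => hv hij x) (hbdd x)
  have hm : AEStronglyMeasurable w := aestronglyMeasurable_of_tendsto_ae atTop
    (fun j => (hvg j).integrable.aestronglyMeasurable) (ae_of_all _ hlim)
  have hi : Integrable w := by
    refine ⟨hm, lt_of_le_of_lt ?_ (ENNReal.ofReal_lt_top (r := N))⟩
    calc ∫⁻ x, ‖w x‖ₑ = ∫⁻ x, liminf (fun j => ‖v j x‖ₑ) atTop :=
          lintegral_congr fun x => (hlim x).enorm.liminf_eq.symm
      _ ≤ liminf (fun j => ∫⁻ x, ‖v j x‖ₑ) atTop :=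
          lintegral_liminf_le' fun j => (hvg j).integrable.aestronglyMeasurable.enorm
      _ ≤ liminf (fun _ : ℕ => ENNReal.ofReal N) atTop := by
          refine liminf_le_liminf (Eventually.of_forall fun j => ?_)
          rw [← ofReal_integral_norm_eq_lintegral_enorm (hvg j).integrable]
          exact ENNReal.ofReal_le_ofReal ((integral_abs_le_sobolevNorm _ _).trans (hN j))
      _ = ENNReal.ofReal N := liminf_const _
  refine ⟨w, hi, hw0, hw1, hle, ?_⟩
  have h0 := tendsto_integral_of_dominated_convergence (F := fun j x => |w x - v j x|)
    (f := fun _ => 0) w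
    (fun j => (hm.sub (hvg j).integrable.aestronglyMeasurable).norm) hi
    (fun j => ae_of_all _ fun x => by
      rw [Real.norm_eq_abs, abs_abs, abs_of_nonneg (sub_nonneg.2 (hle j x))]
      linarith [(hvg j).nonneg x])
    (ae_of_all _ fun x => by
      have := ((tendsto_const_nhds (x := w x)).sub (hlim x)).abs
      simpa using! this)
  simpa using h0

end MonotoneLimit

section MollifiedLimit

variable {u w : En n → ℝ} {g h : En n → (En n →L[ℝ] ℝ)} (b : ContDiffBump (0 : En n))

theorem integral_abs_le_add_integral_abs_sub (hu : Integrable u) (hw : Integrable w) :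
    ∫ x, |w x| ≤ (∫ x, |u x|) + ∫ x, |w x - u x| := by
  have hi : Integrable fun x => |w x - u x| := (hw.sub hu).abs
  rw [← integral_add hu.abs hi]
  refine integral_mono hw.abs (hu.abs.add hi) fun x => ?_
  have := abs_add_le (u x) (w x - u x)
  rwa [add_sub_cancel] at this

theorem isSobolev_mollify (hu : Integrable u) : IsSobolev (mollify b u) (fderiv ℝ (mollify b u)) :=
  ⟨integrable_mollify b hu, integrable_fderiv_mollify b hu,
    isWeakGrad_of_contDiff (contDiff_mollify b hu)⟩

theorem setIntegral_norm_fderiv_mollify_le (hu : Integrable u) (hw : Integrable w)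
    (P : Set (En n)) :
    ∫ x in P, ‖fderiv ℝ (mollify b u) x‖ ≤ (∫ x in P, ‖fderiv ℝ (mollify b w) x‖) +
      (∫ x, ‖fderiv ℝ (b.normed volume) x‖) * ∫ x, |u x - w x| := by
  have hd : ∀ x, fderiv ℝ (mollify b fun y => u y - w y) x =
      fderiv ℝ (mollify b u) x - fderiv ℝ (mollify b w) x := fun x => by
    have e : (mollify b fun y => u y - w y) = fun y => mollify b u y - mollify b w y :=
      funext fun y => mollify_sub b hu hw y
    rw [e]
    exact fderiv_sub ((contDiff_mollify b hu).differentiable one_ne_zero x)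
      ((contDiff_mollify b hw).differentiable one_ne_zero x)
  have hiu := (integrable_fderiv_mollify b hu).norm
  have hiw := (integrable_fderiv_mollify b hw).norm
  have hid := (integrable_fderiv_mollify b (hu.sub hw)).norm
  calc ∫ x in P, ‖fderiv ℝ (mollify b u) x‖
      ≤ ∫ x in P, (‖fderiv ℝ (mollify b w) x‖ +
          ‖fderiv ℝ (mollify b fun y => u y - w y) x‖) := by
        refine integral_mono hiu.restrict (hiw.restrict.add hid.restrict) fun x => ?_
        simp only
        rw [hd]
        exact norm_le_insert' _ _
    _ = (∫ x in P, ‖fderiv ℝ (mollify b w) x‖) +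
          ∫ x in P, ‖fderiv ℝ (mollify b fun y => u y - w y) x‖ :=
        integral_add hiw.restrict hid.restrict
    _ ≤ _ := by
        gcongr
        exact (setIntegral_le_integral hid (ae_of_all _ fun x => norm_nonneg _)).trans
          (integral_norm_fderiv_mollify_le b (hu.sub hw))

theorem IsSobolev.integral_norm_fderiv_mollify_le (hug : IsSobolev u g) :
    ∫ x, ‖fderiv ℝ (mollify b u) x‖ ≤ ∫ x, ‖g x‖ := by
  simp only [hug.fderiv_mollify b]
  exact integral_norm_mollify_le b hug.integrable_grad

/-- Mollifications of `L¹` limits of functions of bounded Sobolev norm. -/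
theorem sobolevNorm_mollify_le_of_tendsto {v : ℕ → En n → ℝ} {g : ℕ → En n → (En n →L[ℝ] ℝ)}
    (hvg : ∀ j, IsSobolev (v j) (g j)) {N : ℝ} (hN : ∀ j, sobolevNorm (v j) (g j) ≤ N)
    (hw : Integrable w) (hlim : Tendsto (fun j => ∫ x, |w x - v j x|) atTop (𝓝 0)) :
    sobolevNorm (mollify b w) (fderiv ℝ (mollify b w)) ≤ N := by
  set D := ∫ x, ‖fderiv ℝ (b.normed (volume : Measure (En n))) x‖ with hD
  have h1 : Tendsto (fun j => N + (1 + D) * ∫ x, |w x - v j x|) atTop (𝓝 (N + (1 + D) * 0)) :=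
    (hlim.const_mul _).const_add _
  rw [mul_zero, add_zero] at h1
  refine ge_of_tendsto' h1 fun j => ?_
  have h2 := setIntegral_norm_fderiv_mollify_le b hw (hvg j).integrable univ
  simp only [Measure.restrict_univ] at h2
  have h3 := (hvg j).integral_norm_fderiv_mollify_le b
  have h4 : ∫ x, |mollify b w x| ≤ ∫ x, |w x| := integral_norm_mollify_le b hw
  have h5 := integral_abs_le_add_integral_abs_sub (hvg j).integrable hw
  have h6 := hN j
  unfold sobolevNorm at h6 ⊢
  linarith

/-- Truncation above level `s` of a function equal to one near `A`. -/
theorem IsSobolev.mul_toReal_cap1_le {A V : Set (En n)} (hug : IsSobolev u g) (hV : IsOpen V)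
    (hA : A ⊆ V) (h1 : ∀ x ∈ V, 1 ≤ u x) {s : ℝ} (hs0 : 0 ≤ s) (hs1 : s < 1) :
    (1 - s) * (cap1 A).toReal ≤ sobolevNorm (fun x => Max.max (u x - s) 0) (aboveGrad u g s) := by
  have hs : 0 < 1 - s := sub_pos.2 hs1
  have h := ((hug.above hs0).const_mul (1 - s)⁻¹).cap1_le hV hA (ae_of_all _ fun x hx => by
    rw [le_inv_mul_iff₀ hs, mul_one]
    exact le_max_of_le_left (by linarith [h1 x hx]))
  rw [sobolevNorm_const_mul _ _ (inv_nonneg.2 hs.le)] at h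
  have h2 := ENNReal.toReal_le_of_le_ofReal
    (mul_nonneg (inv_nonneg.2 hs.le) (sobolevNorm_nonneg _ _)) h
  rwa [le_inv_mul_iff₀ hs] at h2

/-- Capacity of a superlevel set of a function equal to one near `A`. -/
theorem IsSobolev.cap1_superlevel_le {A V : Set (En n)} (hug : IsSobolev u g) (hV : IsOpen V)
    (hA : A ⊆ V) (h1 : ∀ x ∈ V, 1 ≤ u x) (hu0 : ∀ x, 0 ≤ u x) (huc : Continuous u) {s : ℝ}
    (hs0 : 0 < s) (hs1 : s < 1) {M η : ℝ} (hN : sobolevNorm u g ≤ M + η)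
    (hm : M - η ≤ (cap1 A).toReal) (hη : 0 ≤ η) :
    cap1 {x | 2 * s ≤ u x} ≤ ENNReal.ofReal (M + 2 * η / s) := by
  have ha := hug.mul_toReal_cap1_le hV hA h1 hs0.le hs1
  have hab := hug.sobolevNorm_eq_above_add_below hs0.le hu0
  have hb : sobolevNorm (fun x => Min.min (u x) s) (belowGrad u g s) ≤ s * M + 2 * η := by
    nlinarith [mul_le_mul_of_nonneg_left hm (sub_pos.2 hs1).le, mul_nonneg hs0.le hη]
  have hcap := ((hug.below hs0.le).const_mul s⁻¹).cap1_le (A := {x | 2 * s ≤ u x})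
    (V := {x | s < u x}) (isOpen_lt continuous_const huc)
    (fun x hx => lt_of_lt_of_le (by linarith : s < 2 * s) hx) (ae_of_all _ fun x hx => by
      rw [min_eq_right (le_of_lt hx), inv_mul_cancel₀ hs0.ne'])
  refine hcap.trans (ENNReal.ofReal_le_ofReal ?_)
  rw [sobolevNorm_const_mul _ _ (inv_nonneg.2 hs0.le), inv_mul_le_iff₀ hs0]
  calc _ ≤ s * M + 2 * η := hb
    _ = s * (M + 2 * η / s) := by field_simp

/-- Comparison of mollifications at comparable scales. -/
theorem mollify_le_mul_mollify {b b' : ContDiffBump (0 : En n)} {K : ℝ}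
    (hK : b'.rOut ≤ K * b.rIn) (hu : Integrable u) (hu0 : ∀ x, 0 ≤ u x) {x y : En n}
    (hxy : dist x y + b.rOut ≤ b'.rIn) :
    mollify b u y ≤ K ^ n * mollify b' u x := by
  have hK0 : 0 < K := by
    by_contra! hK0
    nlinarith [b.rIn_pos, b'.rOut_pos, mul_nonneg (neg_nonneg.2 hK0) b.rIn_pos.le]
  rw [mollify_apply_swap, mollify_apply_swap, ← integral_const_mul]
  refine integral_mono (convolutionExistsAt_mollify b hu y)
    ((convolutionExistsAt_mollify b' hu x).const_mul _) fun z => ?_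
  simp only [smul_eq_mul]
  rw [← mul_assoc]
  refine mul_le_mul_of_nonneg_right ?_ (hu0 z)
  by_cases hz : y - z ∈ ball (0 : En n) b.rOut
  · have hxz : x - z ∈ closedBall (0 : En n) b'.rIn := by
      rw [mem_ball_zero_iff, ← dist_eq_norm] at hz
      rw [mem_closedBall_zero_iff, ← dist_eq_norm]
      linarith [dist_triangle x y z]
    set I := volume.real (closedBall (0 : En n) b.rIn) with hI
    have hIpos : 0 < I := ENNReal.toReal_pos (measure_closedBall_pos _ _ b.rIn_pos).ne'
      measure_closedBall_lt_top.ne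
    have h1 : b.normed volume (y - z) ≤ 1 / I := b.normed_le_div_measure_closedBall_rIn volume _
    have h2 : ∫ x, b' x ≤ K ^ n * I := by
      refine (b'.integral_le_measure_closedBall volume).trans ?_
      rw [hI, Measure.addHaar_real_closedBall' _ _ b.rIn_pos.le,
        Measure.addHaar_real_closedBall' _ _ b'.rOut_pos.le, ← mul_assoc, finrank_euclideanSpace,
        Fintype.card_fin, ← mul_pow]
      gcongr
      exact b'.rOut_pos.le
    have h3 : b'.normed volume (x - z) = 1 / ∫ x, b' x := by
      rw [b'.normed_def, b'.one_of_mem_closedBall hxz]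
    have hpos : 0 < ∫ x, b' x := b'.integral_pos
    rw [h3]
    refine h1.trans ?_
    rw [mul_one_div, div_le_div_iff₀ hIpos hpos, one_mul]
    exact h2
  · rw [← b.support_normed_eq (μ := volume), Function.notMem_support] at hz
    rw [hz]
    exact mul_nonneg (by positivity) (b'.nonneg_normed _)

theorem mollify_congr_ball {b : ContDiffBump (0 : En n)} {x : En n}
    (h : ∀ y, dist y x < b.rOut → u y = w y) : mollify b u x = mollify b w x := by
  rw [mollify_apply_swap, mollify_apply_swap]
  congr 1
  ext y
  by_cases hy : x - y ∈ ball (0 : En n) b.rOut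
  · rw [mem_ball_zero_iff, ← dist_eq_norm, dist_comm] at hy
    rw [h y hy]
  · rw [← b.support_normed_eq (μ := volume), Function.notMem_support] at hy
    rw [hy, zero_smul, zero_smul]

theorem setIntegral_norm_mollify_le (hg : Integrable g) {P Q : Set (En n)}
    (hP : MeasurableSet P) (hQ : MeasurableSet Q)
    (h : ∀ x ∈ P, ∀ y, dist y x < b.rOut → y ∈ Q) :
    ∫ x in P, ‖mollify b g x‖ ≤ ∫ x in Q, ‖g x‖ := by
  have hq : Integrable (Q.indicator fun y => ‖g y‖) := hg.norm.indicator hQ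
  have hq0 : ∀ x, 0 ≤ Q.indicator (fun y => ‖g y‖) x :=
    fun x => indicator_nonneg (fun y _ => norm_nonneg _) x
  have hm := integrable_mollify b hq
  calc ∫ x in P, ‖mollify b g x‖ ≤ ∫ x in P, mollify b (Q.indicator fun y => ‖g y‖) x := by
        refine setIntegral_mono_on (integrable_mollify b hg).norm.restrict hm.restrict hP
          fun x hx => (norm_mollify_le b g x).trans_eq ?_
        exact mollify_congr_ball fun y hy => (indicator_of_mem (h x hx y hy) fun y => ‖g y‖).symm
    _ ≤ ∫ x, mollify b (Q.indicator fun y => ‖g y‖) x :=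
        setIntegral_le_integral hm (ae_of_all _ (mollify_nonneg b hq0))
    _ = ∫ x in Q, ‖g x‖ := by rw [integral_mollify b hq, integral_indicator hQ]

end MollifiedLimit

section Localization

variable {u w : En n → ℝ} {g h : En n → (En n →L[ℝ] ℝ)}

/-- If the mollification of a test function is small near an open set `S`, the capacity of `A ∩ S`
is controlled by the gradient near `S`. -/
theorem IsCapTest.cap1_inter_le {A S : Set (En n)} (hug : IsCapTest A u g) (hS : IsOpen S)
    {τ : ℝ} (hτ : 0 < τ) (hτ1 : τ ≤ 1) {b : ContDiffBump (0 : En n)} (hb : b.rOut = 2 * τ)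
    {t : ℝ} (ht0 : 0 ≤ t) (ht : t ≤ 1 / 2)
    (hsmall : ∀ x ∈ thickening (5 * τ) S, mollify b u x ≤ t) :
    cap1 (A ∩ S) ≤ ENNReal.ofReal (10 * ∫ x in thickening (7 * τ) S, ‖g x‖) := by
  obtain ⟨ζ, hζ, hζ0, hζ1, hζS, hζsupp, hζ'⟩ := exists_cutoff S hτ
  obtain ⟨V, hV, hAV, hV1⟩ := hug.eq_one
  set T := thickening (5 * τ) S with hT
  set T' := thickening (7 * τ) S with hT'
  have hTm : MeasurableSet T := isOpen_thickening.measurableSet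
  have hT'm : MeasurableSet T' := isOpen_thickening.measurableSet
  have hTT' : T ⊆ T' := thickening_mono (by linarith) S
  have hpos : 0 < 1 - t := by linarith
  have hinv : (1 - t)⁻¹ ≤ 2 := by
    rw [inv_le_comm₀ hpos two_pos]; linarith
  have hinv0 : 0 ≤ (1 - t)⁻¹ := inv_nonneg.2 hpos.le
  have hw := (hug.toIsSobolev.above ht0).const_mul (1 - t)⁻¹
  have hwz := hw.mul_contDiff hζ (C := 1) (K := τ⁻¹)
    (fun x => (abs_of_nonneg (hζ0 x)).trans_le (hζ1 x)) hζ'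
  have hcap := hwz.cap1_le (hV.inter hS) (inter_subset_inter_left S hAV) (ae_of_all _ fun x hx => by
    rw [hζS x hx.2, hV1 x hx.1, max_eq_left hpos.le, inv_mul_cancel₀ hpos.ne', one_mul])
  refine hcap.trans (ENNReal.ofReal_le_ofReal ?_)
  set G := ∫ x in T', ‖g x‖ with hG
  have hpoin : ∫ x in T, |u x - mollify b u x| ≤ 2 * τ * G := by
    rw [← hb]
    refine hug.toIsSobolev.integral_abs_sub_mollify_le b hTm hT'm fun x hx y hy => ?_
    rw [hT, mem_thickening_iff] at hx
    obtain ⟨z, hz, hxz⟩ := hx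
    rw [hT', mem_thickening_iff]
    refine ⟨z, hz, (dist_triangle y x z).trans_lt ?_⟩
    rw [hb] at hy
    linarith
  have hgT : ∫ x in T, ‖g x‖ ≤ G := setIntegral_mono_set hug.integrable_grad.norm.integrableOn
    (ae_of_all _ fun x => norm_nonneg _) hTT'.eventuallyLE
  have hζT : ∀ x, x ∉ T → ζ x = 0 := fun x hx => by
    by_contra hne
    exact hx (by rw [hT, mem_thickening_iff]; exact hζsupp x hne)
  have hζ'T : ∀ x, x ∉ T → fderiv ℝ ζ x = 0 := fun x hx => by
    refine IsLocalMin.fderiv_eq_zero (Eventually.of_forall fun y => ?_)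
    rw [hζT x hx]
    exact hζ0 y
  have hab : ∀ x ∈ T, (1 - t)⁻¹ * Max.max (u x - t) 0 ≤ 2 * |u x - mollify b u x| := fun x hx => by
    refine mul_le_mul hinv (max_le ?_ (abs_nonneg _)) (le_max_right _ _) zero_le_two
    exact (by linarith [hsmall x hx] : u x - t ≤ u x - mollify b u x).trans (le_abs_self _)
  have hnn : ∀ x, 0 ≤ (1 - t)⁻¹ * Max.max (u x - t) 0 := fun x =>
    mul_nonneg hinv0 (le_max_right _ _)
  have hid : Integrable fun x => |u x - mollify b u x| :=
    (hug.integrable.sub (integrable_mollify b hug.integrable)).abs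
  have hig := hug.integrable_grad.norm
  have hfun : ∫ x, |(1 - t)⁻¹ * Max.max (u x - t) 0 * ζ x| ≤
      2 * ∫ x in T, |u x - mollify b u x| := by
    rw [← integral_const_mul, ← integral_indicator hTm]
    refine integral_mono hwz.integrable.abs ((hid.const_mul 2).indicator hTm) fun x => ?_
    by_cases hx : x ∈ T
    · rw [indicator_of_mem hx]
      simp only
      rw [abs_of_nonneg (mul_nonneg (hnn x) (hζ0 x))]
      exact (mul_le_of_le_one_right (hnn x) (hζ1 x)).trans (hab x hx)
    · rw [indicator_of_notMem hx]
      simp [hζT x hx]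
  have hgrad : ∫ x, ‖ζ x • ((1 - t)⁻¹ • aboveGrad u g t x) +
        ((1 - t)⁻¹ * Max.max (u x - t) 0) • fderiv ℝ ζ x‖ ≤
      2 * (∫ x in T, ‖g x‖) + 2 * τ⁻¹ * ∫ x in T, |u x - mollify b u x| := by
    rw [← integral_const_mul, ← integral_const_mul,
      ← integral_add (hig.const_mul 2).restrict (hid.const_mul _).restrict,
      ← integral_indicator hTm]
    refine integral_mono hwz.integrable_grad.norm
      (((hig.const_mul 2).add (hid.const_mul _)).indicator hTm) fun x => ?_
    by_cases hx : x ∈ T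
    · rw [indicator_of_mem hx]
      refine (norm_add_le _ _).trans (add_le_add ?_ ?_)
      · rw [norm_smul, norm_smul, Real.norm_of_nonneg (hζ0 x), Real.norm_of_nonneg hinv0]
        refine (mul_le_of_le_one_left (by positivity) (hζ1 x)).trans ?_
        exact mul_le_mul hinv (norm_aboveGrad_le u g t x) (norm_nonneg _) zero_le_two
      · rw [norm_smul, Real.norm_of_nonneg (hnn x)]
        calc _ ≤ 2 * |u x - mollify b u x| * τ⁻¹ :=
              mul_le_mul (hab x hx) (hζ' x) (norm_nonneg _) (by positivity)
          _ = _ := by ring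
    · rw [indicator_of_notMem hx]
      simp [hζT x hx, hζ'T x hx]
  have hG0 : 0 ≤ G := integral_nonneg fun x => norm_nonneg _
  have h3 : 2 * τ⁻¹ * ∫ x in T, |u x - mollify b u x| ≤ 4 * G := by
    calc _ ≤ 2 * τ⁻¹ * (2 * τ * G) := by gcongr
      _ = 4 * G := by field_simp; ring
  unfold sobolevNorm
  nlinarith [mul_le_mul_of_nonneg_right hτ1 hG0]

/-- Near-optimality of the mollified limit forces the gradients of the test functions to be small
away from its superlevel sets. -/
theorem eventually_setIntegral_norm_grad_le {v : ℕ → En n → ℝ} {g : ℕ → En n → (En n →L[ℝ] ℝ)}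
    {M η : ℝ} (hη : 0 < η) (hvg : ∀ j, IsSobolev (v j) (g j))
    (hN : ∀ j, sobolevNorm (v j) (g j) ≤ M + η) (hw : Integrable w)
    (hlim : Tendsto (fun j => ∫ x, |w x - v j x|) atTop (𝓝 0))
    (b : ContDiffBump (0 : En n)) {A V : Set (En n)} (hV : IsOpen V) (hA : A ⊆ V)
    (h1 : ∀ x ∈ V, 1 ≤ mollify b w x) (hm : M - η ≤ (cap1 A).toReal)
    {t : ℝ} (ht0 : 0 ≤ t) (ht1 : t < 1) {Q : Set (En n)} (hQ : MeasurableSet Q)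
    (hsep : ∀ x, t ≤ mollify b w x → ∀ y, dist y x < b.rOut → y ∉ Q) :
    ∀ᶠ j in atTop, ∫ x in Q, ‖g j x‖ ≤ t * M + 3 * η := by
  set D := ∫ x, ‖fderiv ℝ (b.normed (volume : Measure (En n))) x‖ with hD
  have hlim' : Tendsto (fun j => (D + 1) * ∫ x, |w x - v j x|) atTop (𝓝 0) := by
    simpa using hlim.const_mul (D + 1)
  set P := {x | t ≤ mollify b w x} with hP
  have hPm : MeasurableSet P :=
    (isClosed_le continuous_const (contDiff_mollify b hw).continuous).measurableSet
  have hH := isSobolev_mollify b hw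
  have habove := hH.mul_toReal_cap1_le hV hA h1 ht0 ht1
  have hgradP : ∫ x, ‖aboveGrad (mollify b w) (fderiv ℝ (mollify b w)) t x‖ ≤
      ∫ x in P, ‖fderiv ℝ (mollify b w) x‖ := by
    rw [← integral_indicator hPm]
    refine integral_mono (hH.above ht0).integrable_grad.norm
      (hH.integrable_grad.norm.indicator hPm) fun x => ?_
    by_cases hx : x ∈ P
    · rw [indicator_of_mem hx]
      exact norm_aboveGrad_le _ _ _ _
    · rw [indicator_of_notMem hx]
      simp only
      rw [hP, mem_ofPred_eq, not_le, ← sub_neg] at hx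
      rw [norm_aboveGrad, Real.sign_of_neg hx]
      simp
  have hfun : ∫ x, |Max.max (mollify b w x - t) 0| ≤ ∫ x, |w x| := by
    refine le_trans ?_ (integral_norm_mollify_le b hw)
    refine integral_mono (hH.above ht0).integrable.abs hH.integrable.norm fun x => ?_
    simp only
    rw [abs_of_nonneg (le_max_right _ _), Real.norm_eq_abs]
    exact max_le ((sub_le_self _ ht0).trans (le_abs_self _)) (abs_nonneg _)
  filter_upwards [hlim'.eventually (gt_mem_nhds hη)] with j hj
  have ha := setIntegral_norm_fderiv_mollify_le b hw (hvg j).integrable P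
  have hb : ∫ x in P, ‖fderiv ℝ (mollify b (v j)) x‖ ≤ ∫ x in Qᶜ, ‖g j x‖ := by
    simp only [(hvg j).fderiv_mollify b]
    exact setIntegral_norm_mollify_le b (hvg j).integrable_grad hPm hQ.compl
      fun x hx y hy => hsep x hx y hy
  have hc := integral_add_compl hQ (hvg j).integrable_grad.norm
  have he := integral_abs_le_add_integral_abs_sub (hvg j).integrable hw
  have hNj := hN j
  have hmt := mul_le_mul_of_nonneg_left hm (sub_pos.2 ht1).le
  unfold sobolevNorm at hNj habove
  nlinarith [mul_nonneg ht0 hη.le]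

end Localization

section Improvement

/-- Each set of the sequence has a uniform neighbourhood inside the union. -/
def HasUniformNhds (A : ℕ → Set (En n)) : Prop :=
  ∀ k, ∃ d > 0, thickening d (A k) ⊆ ⋃ j, A j

theorem HasUniformNhds.inter_sublevel {A : ℕ → Set (En n)} (hA : Monotone A)
    (hd : HasUniformNhds A) {F : En n → ℝ} {K : NNReal} (hF : LipschitzWith K F) {s : ℕ → ℝ}
    (hs : StrictMono s) : HasUniformNhds fun k => A k ∩ {x | F x < s k} := by
  intro k
  obtain ⟨d, hd0, hd⟩ := hd k
  have hgap : 0 < s (k + 1) - s k := sub_pos.2 (hs (Nat.lt_succ_self k))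
  have hK : (0 : ℝ) < K + 1 := by positivity
  refine ⟨min d ((s (k + 1) - s k) / (K + 1)), lt_min hd0 (div_pos hgap hK), fun x hx => ?_⟩
  obtain ⟨y, ⟨hyA, hyF⟩, hxy⟩ := mem_thickening_iff.1 hx
  obtain ⟨j, hj⟩ := mem_iUnion.1
    (hd (mem_thickening_iff.2 ⟨y, hyA, hxy.trans_le (min_le_left _ _)⟩))
  refine mem_iUnion.2 ⟨max j (k + 1), hA (le_max_left _ _) hj, ?_⟩
  have h1 : dist x y < (s (k + 1) - s k) / (K + 1) := hxy.trans_le (min_le_right _ _)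
  rw [lt_div_iff₀ hK] at h1
  have h2 : F x - F y ≤ K * dist x y := by
    refine (le_abs_self _).trans ?_
    simpa [Real.dist_eq] using hF.dist_le_mul x y
  have h3 : F y < s k := hyF
  have h4 : s (k + 1) ≤ s (max j (k + 1)) := hs.monotone (le_max_right _ _)
  have h5 : F x < s (max j (k + 1)) := by nlinarith [dist_nonneg (x := x) (y := y)]
  exact h5

theorem exists_improvement {A : ℕ → Set (En n)} (hA : Monotone A) (hd : HasUniformNhds A)
    (hfin : ⨆ k, cap1 (A k) ≠ ∞) {ε : ℝ} (hε : 0 < ε) :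
    ∃ (A' : ℕ → Set (En n)) (W : Set (En n)), Monotone A' ∧ HasUniformNhds A' ∧
      (∀ k, cap1 (A' k) ≤ ENNReal.ofReal ε) ∧
      cap1 W ≤ (⨆ k, cap1 (A k)) + ENNReal.ofReal ε ∧ ∀ k, A k \ W ⊆ A' k := by
  set M := (⨆ k, cap1 (A k)).toReal with hMdef
  have hM0 : 0 ≤ M := ENNReal.toReal_nonneg
  have hMeq : ENNReal.ofReal M = ⨆ k, cap1 (A k) := ENNReal.ofReal_toReal hfin
  have hM : ∀ k, cap1 (A k) ≤ ENNReal.ofReal M := fun k => hMeq ▸ le_iSup (fun k => cap1 (A k)) k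
  set C : ℝ := 24 ^ n with hC
  have hC1 : 1 ≤ C := one_le_pow₀ (by norm_num)
  set t : ℝ := min (1 / 4) (ε / (20 * (M + 1))) with ht
  have ht0 : 0 < t := lt_min (by norm_num) (by positivity)
  have ht4 : t ≤ 1 / 4 := min_le_left _ _
  have htM : 10 * (t * M) ≤ ε / 2 := by
    have h : t * (20 * (M + 1)) ≤ ε := (le_div_iff₀ (by positivity)).1 (min_le_right _ _)
    nlinarith
  set s : ℝ := t / (4 * C) with hs
  have hs0 : 0 < s := by positivity
  have hsC : C * (4 * s) = t := by rw [hs]; field_simp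
  have hs1 : s < 1 := by nlinarith
  set η : ℝ := min (ε / 60) (ε * s / 2) with hη
  have hη0 : 0 < η := lt_min (by positivity) (by positivity)
  have hηε : 30 * η ≤ ε / 2 := by linarith [min_le_left (ε / 60) (ε * s / 2)]
  have hηs : 2 * η / s ≤ ε := by
    rw [div_le_iff₀ hs0]; linarith [min_le_right (ε / 60) (ε * s / 2)]
  obtain ⟨k₀, hk₀⟩ : ∃ k₀, M - η ≤ (cap1 (A k₀)).toReal := by
    by_contra! hcon
    have hnn : 0 ≤ M - η := ENNReal.toReal_nonneg.trans (hcon 0).le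
    have h : ⨆ k, cap1 (A k) ≤ ENNReal.ofReal (M - η) := iSup_le fun k => by
      rw [← ENNReal.ofReal_toReal (ne_top_of_le_ne_top ENNReal.ofReal_ne_top (hM k))]
      exact ENNReal.ofReal_le_ofReal (hcon k).le
    have := ENNReal.toReal_le_of_le_ofReal hnn h
    linarith
  obtain ⟨v, g, hv, hvg, hN⟩ := exists_monotone_isCapTest hA hM0 hM hη0
  obtain ⟨w, hw, hw0, hw1, hvw, hlim⟩ := exists_tendsto_of_monotone hv hvg hN
  have hwA : ∀ x ∈ ⋃ j, A j, w x = 1 := fun x hx => by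
    obtain ⟨j, hj⟩ := mem_iUnion.1 hx
    obtain ⟨V, -, hAV, hV1⟩ := (hvg j).eq_one
    exact le_antisymm (hw1 x) ((hV1 x (hAV hj)).symm.trans_le (hvw j x))
  obtain ⟨d, hd0, hdk₀⟩ := hd k₀
  set τ : ℝ := min 1 (d / 100) with hτ
  have hτ0 : 0 < τ := lt_min one_pos (by positivity)
  have hτ1 : τ ≤ 1 := min_le_left _ _
  have hτd : 100 * τ ≤ d := by linarith [min_le_right 1 (d / 100)]
  let b : ContDiffBump (0 : En n) := ⟨τ, 2 * τ, hτ0, by linarith⟩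
  let b' : ContDiffBump (0 : En n) := ⟨12 * τ, 24 * τ, by linarith, by linarith⟩
  set V := thickening (d / 2) (A k₀) with hV
  have hVo : IsOpen V := isOpen_thickening
  have hAV : A k₀ ⊆ V := self_subset_thickening (by positivity) _
  have hone : ∀ c : ContDiffBump (0 : En n), c.rOut ≤ 24 * τ → ∀ x ∈ V, 1 ≤ mollify c w x := by
    intro c hc x hx
    obtain ⟨z, hz, hxz⟩ := mem_thickening_iff.1 hx
    have hball : ∀ y ∈ ball x c.rOut, w y = 1 := fun y hy => by
      refine hwA y (hdk₀ (mem_thickening_iff.2 ⟨z, hz, (dist_triangle y x z).trans_lt ?_⟩))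
      rw [mem_ball] at hy
      linarith
    have hx1 := hball x (mem_ball_self c.rOut_pos)
    rw [mollify_eq_of_forall_mem_ball c fun y hy => (hball y hy).trans hx1.symm, hx1]
  set F := mollify b' w with hF
  obtain ⟨K, hK⟩ := exists_lipschitzWith_mollify b' hw
  have hsob : ∀ j, IsSobolev (v j) (g j) := fun j => (hvg j).toIsSobolev
  set S : Set (En n) := {x | F x < 4 * s} with hS
  have hSo : IsOpen S := isOpen_lt hK.continuous continuous_const
  have hnear : ∀ y z, z ∈ S → dist z y ≤ 10 * τ → mollify b w y < t := fun y z hz hzy => by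
    have h1 : mollify b w y ≤ C * F z :=
      mollify_le_mul_mollify (b := b) (b' := b') (K := 24) le_rfl hw hw0
        (by change dist z y + 2 * τ ≤ 12 * τ; linarith)
    have h2 : F z < 4 * s := hz
    nlinarith
  have hev := eventually_setIntegral_norm_grad_le hη0 hsob hN hw hlim b hVo hAV
    (hone b (by change 2 * τ ≤ 24 * τ; linarith)) hk₀ ht0.le (by linarith)
    (Q := thickening (7 * τ) S) isOpen_thickening.measurableSet fun x hx y hyx hy => by
      obtain ⟨z, hz, hyz⟩ := mem_thickening_iff.1 hy
      refine absurd (hnear x z hz ?_) (not_lt.2 hx)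
      have h1 := dist_triangle z y x
      have h2 : dist y x < 2 * τ := hyx
      rw [dist_comm] at hyz
      linarith
  have hcapS : ∀ k, cap1 (A k ∩ S) ≤ ENNReal.ofReal ε := fun k => by
    obtain ⟨j, hj, hkj⟩ := (hev.and (eventually_ge_atTop k)).exists
    refine (cap1_mono (inter_subset_inter_left S (hA hkj))).trans
      (((hvg j).cap1_inter_le hSo hτ0 hτ1 (b := b) rfl ht0.le (by linarith) fun x hx => ?_).trans
        (ENNReal.ofReal_le_ofReal (by linarith)))
    obtain ⟨z, hz, hxz⟩ := mem_thickening_iff.1 hx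
    rw [dist_comm] at hxz
    exact (mollify_mono b (hsob j).integrable hw (hvw j) x).trans
      (hnear x z hz (by linarith)).le
  have hcapW : cap1 {x | 2 * s ≤ F x} ≤ ENNReal.ofReal (M + 2 * η / s) :=
    (isSobolev_mollify b' hw).cap1_superlevel_le hVo hAV (hone b' le_rfl)
      (mollify_nonneg b' hw0) hK.continuous hs0 hs1
      (sobolevNorm_mollify_le_of_tendsto b' hsob hN hw hlim) hk₀ hη0.le
  let σ : ℕ → ℝ := fun k => 2 * s * (2 - 1 / ((k : ℝ) + 1))
  have hσ : StrictMono σ := strictMono_nat_of_lt_succ fun k => by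
    refine mul_lt_mul_of_pos_left ?_ (by positivity)
    refine sub_lt_sub_left (one_div_lt_one_div_of_lt (by positivity) ?_) _
    push_cast
    linarith
  have hσ0 : σ 0 = 2 * s := by simp only [σ]; norm_num
  have hσS : ∀ k, {x | F x < σ k} ⊆ S := fun k x hx => by
    have h1 : F x < σ k := hx
    have h2 : σ k < 4 * s := by
      have : (0 : ℝ) < 1 / ((k : ℝ) + 1) := by positivity
      simp only [σ]
      nlinarith
    exact h1.trans h2
  refine ⟨fun k => A k ∩ {x | F x < σ k}, {x | 2 * s ≤ F x}, ?_, hd.inter_sublevel hA hK hσ,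
    fun k => (cap1_mono (inter_subset_inter_right _ (hσS k))).trans (hcapS k), ?_, ?_⟩
  · exact fun i j hij => inter_subset_inter (hA hij)
      fun x (hx : F x < σ i) => hx.trans_le (hσ.monotone hij)
  · rw [← hMeq, ← ENNReal.ofReal_add hM0 hε.le]
    exact hcapW.trans (ENNReal.ofReal_le_ofReal (by linarith))
  · rintro k x ⟨hxA, hxW⟩
    refine ⟨hxA, ?_⟩
    have h1 : F x < 2 * s := not_le.1 hxW
    exact h1.trans_le (hσ0 ▸ hσ.monotone (Nat.zero_le k))

end Improvement

section Iteration

/-- Continuity from below for sequences with uniform neighbourhoods. -/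
theorem HasUniformNhds.cap1_iUnion_le {A : ℕ → Set (En n)} (hA : Monotone A)
    (hd : HasUniformNhds A) : cap1 (⋃ k, A k) ≤ ⨆ k, cap1 (A k) := by
  rcases eq_or_ne (⨆ k, cap1 (A k)) ∞ with hfin | hfin
  · rw [hfin]; exact le_top
  refine ENNReal.le_of_forall_pos_le_add fun δ hδ _ => ?_
  obtain ⟨ε, hε0, hε⟩ := ENNReal.exists_pos_sum_of_countable
    (ENNReal.coe_ne_zero.2 (half_pos hδ).ne') ℕ
  let X := {A : ℕ → Set (En n) // Monotone A ∧ HasUniformNhds A ∧ ⨆ k, cap1 (A k) ≠ ∞}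
  have hstep : ∀ (i : ℕ) (B : X), ∃ (B' : X) (W : Set (En n)), (∀ k, cap1 (B'.1 k) ≤ ε i) ∧
      cap1 W ≤ (⨆ k, cap1 (B.1 k)) + ε i ∧ ∀ k, B.1 k \ W ⊆ B'.1 k := by
    rintro i ⟨B, hB, hBd, hBfin⟩
    obtain ⟨B', W, h1, h2, h3, h4, h5⟩ :=
      exists_improvement hB hBd hBfin (NNReal.coe_pos.2 (hε0 i))
    rw [ENNReal.ofReal_coe_nnreal] at h3 h4
    exact ⟨⟨B', h1, h2, ne_top_of_le_ne_top ENNReal.coe_ne_top (iSup_le h3)⟩, W, h3, h4, h5⟩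
  choose next W hnext hW hsub using hstep
  let B : ℕ → X := fun i => Nat.rec ⟨A, hA, hd, hfin⟩ (fun i B => next i B) i
  set Z : ℕ → Set (En n) := fun i => W i (B i) with hZ
  set Y : ℕ → Set (En n) := fun k => ⋂ i, (B (i + 1)).1 k with hY
  have hcover : ⋃ k, A k ⊆ (⋃ i, Z i) ∪ ⋃ k, Y k := by
    intro x hx
    obtain ⟨k, hk⟩ := mem_iUnion.1 hx
    by_cases hxZ : x ∈ ⋃ i, Z i
    · exact Or.inl hxZ
    have hmem : ∀ i, x ∈ (B i).1 k := fun i => by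
      induction i with
      | zero => exact hk
      | succ i ih => exact hsub i (B i) k ⟨ih, fun h => hxZ (mem_iUnion.2 ⟨i, h⟩)⟩
    exact Or.inr (mem_iUnion.2 ⟨k, mem_iInter.2 fun i => hmem (i + 1)⟩)
  have hεt : ∑' i, (ε i : ℝ≥0∞) ≠ ∞ := (hε.trans ENNReal.coe_lt_top).ne
  have hY0 : ∀ k, cap1 (Y k) = 0 := fun k => by
    refine le_antisymm (ge_of_tendsto' (ENNReal.tendsto_atTop_zero_of_tsum_ne_top hεt)
      fun i => ?_) zero_le
    exact (cap1_mono (iInter_subset _ i)).trans (hnext i (B i) k)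
  have hYu : cap1 (⋃ k, Y k) = 0 := by
    refine le_antisymm ((_root_.cap1_iUnion_le Y).trans ?_) zero_le
    simp [hY0]
  have hZs : ∀ i, cap1 (Z (i + 1)) ≤ ε i + ε (i + 1) := fun i =>
    (hW (i + 1) (B (i + 1))).trans
      (add_le_add (iSup_le fun k => hnext i (B i) k) le_rfl)
  have hZu : cap1 (⋃ i, Z i) ≤ (⨆ k, cap1 (A k)) + δ := by
    calc cap1 (⋃ i, Z i) ≤ ∑' i, cap1 (Z i) := _root_.cap1_iUnion_le Z
      _ = cap1 (Z 0) + ∑' i, cap1 (Z (i + 1)) := tsum_eq_zero_add' ENNReal.summable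
      _ ≤ ((⨆ k, cap1 (A k)) + ε 0) + ∑' i, ((ε i : ℝ≥0∞) + ε (i + 1)) :=
          add_le_add (hW 0 (B 0)) (ENNReal.tsum_le_tsum hZs)
      _ = (⨆ k, cap1 (A k)) + (∑' i, (ε i : ℝ≥0∞) + ∑' i, (ε i : ℝ≥0∞)) := by
          rw [ENNReal.tsum_add, add_assoc, add_left_comm (ε 0 : ℝ≥0∞),
            ← tsum_eq_zero_add' (f := fun i => (ε i : ℝ≥0∞)) ENNReal.summable]
      _ ≤ (⨆ k, cap1 (A k)) + δ := by
          refine add_le_add le_rfl ((add_le_add hε.le hε.le).trans_eq ?_)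
          rw [← ENNReal.coe_add, add_halves]
  calc cap1 (⋃ k, A k) ≤ cap1 (⋃ i, Z i) + cap1 (⋃ k, Y k) :=
        (cap1_mono hcover).trans (cap1_union_le _ _)
    _ ≤ _ := by rw [hYu, add_zero]; exact hZu

/-- The points of `V k` at distance at least `1 / (k + 1)` from the complement. -/
def shrink (V : ℕ → Set (En n)) (k : ℕ) : Set (En n) := {x | ball x (1 / ((k : ℝ) + 1)) ⊆ V k}

theorem monotone_shrink {V : ℕ → Set (En n)} (hV : Monotone V) : Monotone (shrink V) := by
  intro i j hij x hx
  refine ((ball_subset_ball ?_).trans hx).trans (hV hij)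
  exact one_div_le_one_div_of_le (by positivity) (by exact_mod_cast Nat.succ_le_succ hij)

theorem shrink_subset (V : ℕ → Set (En n)) (k : ℕ) : shrink V k ⊆ V k :=
  fun _ hx => hx (mem_ball_self (by positivity))

theorem hasUniformNhds_shrink {V : ℕ → Set (En n)} (hV : Monotone V) :
    HasUniformNhds (shrink V) := by
  intro k
  have hr : (0 : ℝ) < 1 / (2 * ((k : ℝ) + 1)) := by positivity
  have hr2 : 1 / (2 * ((k : ℝ) + 1)) + 1 / (2 * ((k : ℝ) + 1)) = 1 / ((k : ℝ) + 1) := by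
    field_simp; norm_num
  refine ⟨_, hr, fun x hx => mem_iUnion.2 ⟨2 * k + 1, ?_⟩⟩
  obtain ⟨y, hy, hxy⟩ := mem_thickening_iff.1 hx
  intro z hz
  refine hV (by omega : k ≤ 2 * k + 1) (hy ?_)
  rw [mem_ball] at hz ⊢
  have e : 1 / (((2 * k + 1 : ℕ) : ℝ) + 1) = 1 / (2 * ((k : ℝ) + 1)) := by
    push_cast; ring
  rw [e] at hz
  linarith [dist_triangle z x y]

theorem iUnion_subset_iUnion_shrink {V : ℕ → Set (En n)} (hV : Monotone V)
    (ho : ∀ k, IsOpen (V k)) : ⋃ k, V k ⊆ ⋃ k, shrink V k := by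
  intro x hx
  obtain ⟨k, hk⟩ := mem_iUnion.1 hx
  obtain ⟨r, hr, hball⟩ := Metric.isOpen_iff.1 (ho k) x hk
  obtain ⟨m, hm⟩ := exists_nat_one_div_lt hr
  refine mem_iUnion.2 ⟨max k m, ?_⟩
  refine ((ball_subset_ball ?_).trans hball).trans (hV (le_max_left k m))
  refine (one_div_le_one_div_of_le (by positivity) ?_).trans hm.le
  exact_mod_cast Nat.succ_le_succ (le_max_right k m)

theorem cap1_iUnion_le_iSup {A : ℕ → Set (En n)} (hA : Monotone A) :
    cap1 (⋃ k, A k) ≤ ⨆ k, cap1 (A k) := by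
  rcases eq_or_ne (⨆ k, cap1 (A k)) ∞ with hfin | hfin
  · rw [hfin]; exact le_top
  refine ENNReal.le_of_forall_pos_le_add fun η hη _ => ?_
  set M := (⨆ k, cap1 (A k)).toReal with hMdef
  have hM0 : 0 ≤ M := ENNReal.toReal_nonneg
  have hMeq : ENNReal.ofReal M = ⨆ k, cap1 (A k) := ENNReal.ofReal_toReal hfin
  obtain ⟨v, g, hv, hvg, hN⟩ := exists_monotone_isCapTest hA hM0
    (fun k => hMeq ▸ le_iSup (fun k => cap1 (A k)) k) (NNReal.coe_pos.2 hη)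
  choose U hUo hAU hU1 using fun j => (hvg j).eq_one
  set V : ℕ → Set (En n) := fun k => ⋃ i ≤ k, U i with hV
  have hVm : Monotone V := fun i j hij => biUnion_subset_biUnion_left fun m hm => le_trans hm hij
  have hVo : ∀ k, IsOpen (V k) := fun k => isOpen_biUnion fun i _ => hUo i
  have hAV : ⋃ k, A k ⊆ ⋃ k, V k := iUnion_mono fun k =>
    (hAU k).trans (subset_biUnion_of_mem (u := U) (le_refl k))
  have hcapV : ∀ k, cap1 (V k) ≤ (⨆ k, cap1 (A k)) + η := fun k => by
    have h1 : cap1 (V k) ≤ ENNReal.ofReal (sobolevNorm (v k) (g k)) :=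
      (hvg k).toIsSobolev.cap1_le (hVo k) Subset.rfl (ae_of_all _ fun x hx => by
        obtain ⟨i, hi, hxi⟩ := mem_iUnion₂.1 hx
        exact (hU1 i x hxi).symm.trans_le (hv hi x))
    refine h1.trans ((ENNReal.ofReal_le_ofReal (hN k)).trans_eq ?_)
    rw [ENNReal.ofReal_add hM0 (NNReal.coe_nonneg η), hMeq, ENNReal.ofReal_coe_nnreal]
  calc cap1 (⋃ k, A k) ≤ cap1 (⋃ k, shrink V k) :=
        cap1_mono (hAV.trans (iUnion_subset_iUnion_shrink hVm hVo))
    _ ≤ ⨆ k, cap1 (shrink V k) :=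
        (hasUniformNhds_shrink hVm).cap1_iUnion_le (monotone_shrink hVm)
    _ ≤ _ := iSup_le fun k => (cap1_mono (shrink_subset V k)).trans (hcapV k)

end Iteration

/-- Continuity of the Sobolev 1-capacity along increasing sequences of sets. -/
theorem cap1_tendsto_of_monotone (hn : 2 ≤ n) (A : ℕ → Set (En n)) (hA : Monotone A) :
    Tendsto (fun j => cap1 (A j)) atTop (𝓝 (cap1 (⋃ j, A j))) := by
  have h : cap1 (⋃ j, A j) = ⨆ j, cap1 (A j) :=
    le_antisymm (cap1_iUnion_le_iSup hA) (iSup_le fun j => cap1_mono (subset_iUnion A j))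
  rw [h]
  exact tendsto_atTop_iSup fun i j hij => cap1_mono (hA hij)
end
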